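/- arXiv:1508.04836 — 3 statements merged into one kernel-verified Lean document; each statement's English description precedes it below -/
import Mathlib

section
/- There exists an absolute constant C such that for every finite irreducible reversible Markov chain (Ω,P,π) and every function f : Ω → ℝ: E_π[ sup_{t ≥ 0} (t+1)² · |(A_{t+1} f − A_t f)(x)|² ] ≤ C · Var_π(f), where A_t = (P^t + P^{t+1})/2 (so A_{t+1} f − A_t f = (P^{t+2} − P^t) f / 2) and the supremum is over integers t ≥ 0. -/
open Matrix Filter Asymptotics

/-- `P` is a stochastic matrix. -/
def IsStochastic {Ω : Type*} [Fintype Ω] (P : Matrix Ω Ω ℝ) : Prop :=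
  (∀ x y, 0 ≤ P x y) ∧ ∀ x, ∑ y, P x y = 1

/-- `P` is irreducible. -/
def IsIrreducibleMatrix {Ω : Type*} [Fintype Ω] [DecidableEq Ω] (P : Matrix Ω Ω ℝ) : Prop :=
  ∀ x y, ∃ n : ℕ, 0 < (P ^ n) x y

/-- `μ` is a probability vector. -/
def IsProbVec {Ω : Type*} [Fintype Ω] (μ : Ω → ℝ) : Prop :=
  (∀ x, 0 ≤ μ x) ∧ ∑ x, μ x = 1

/-- The chain `(P, pi)` is reversible. -/
def IsReversible {Ω : Type*} [Fintype Ω] (P : Matrix Ω Ω ℝ) (pi : Ω → ℝ) : Prop :=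
  ∀ x y, pi x * P x y = pi y * P y x

/-- A finite irreducible Markov chain `P` with stationary distribution `pi`. -/
def IsMC {Ω : Type*} [Fintype Ω] [DecidableEq Ω] (P : Matrix Ω Ω ℝ) (pi : Ω → ℝ) : Prop :=
  IsStochastic P ∧ IsIrreducibleMatrix P ∧ IsProbVec pi ∧ pi ᵥ* P = pi

/-- A finite irreducible reversible Markov chain `P` with stationary distribution `pi`. -/
def IsRevMC {Ω : Type*} [Fintype Ω] [DecidableEq Ω] (P : Matrix Ω Ω ℝ) (pi : Ω → ℝ) : Prop :=
  IsMC P pi ∧ IsReversible P pi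

/-- Total-variation distance between two measures on a finite set. -/
noncomputable def tvDist {Ω : Type*} [Fintype Ω] (μ ν : Ω → ℝ) : ℝ :=
  (∑ x, |μ x - ν x|) / 2

/-- The lazy version `(I + P)/2` of `P`. -/
noncomputable def lazyM {Ω : Type*} [Fintype Ω] [DecidableEq Ω] (P : Matrix Ω Ω ℝ) :
    Matrix Ω Ω ℝ :=
  (2 : ℝ)⁻¹ • (1 + P)

/-- `d_c(t, μ)`: TV distance from stationarity of the continuous-time chain at time `t`,
started from `μ`. -/
noncomputable def contDist {Ω : Type*} [Fintype Ω] [DecidableEq Ω] (P : Matrix Ω Ω ℝ) (pi : Ω → ℝ)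
    (t : ℝ) (μ : Ω → ℝ) : ℝ :=
  tvDist (fun y => ∑' k : ℕ, Real.exp (-t) * t ^ k / (Nat.factorial k) * (μ ᵥ* (P ^ k)) y) pi

/-- `d_L(t, μ)`: TV distance from stationarity of the lazy chain at (discrete) time `t`,
started from `μ`. -/
noncomputable def lazyDist {Ω : Type*} [Fintype Ω] [DecidableEq Ω] (P : Matrix Ω Ω ℝ)
    (pi : Ω → ℝ) (t : ℝ) (μ : Ω → ℝ) : ℝ :=
  tvDist (μ ᵥ* (lazyM P ^ ⌊t⌋₊)) pi

/-- `d_ave(t, μ)`: TV distance from stationarity of the averaged chain at (discrete) time `t`,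
started from `μ`. -/
noncomputable def aveDist {Ω : Type*} [Fintype Ω] [DecidableEq Ω] (P : Matrix Ω Ω ℝ) (pi : Ω → ℝ)
    (t : ℝ) (μ : Ω → ℝ) : ℝ :=
  tvDist (fun y => ((μ ᵥ* (P ^ ⌊t⌋₊)) y + (μ ᵥ* (P ^ (⌊t⌋₊ + 1))) y) / 2) pi

/-- The point mass at `x`. -/
noncomputable def deltaMass {Ω : Type*} [DecidableEq Ω] (x : Ω) : Ω → ℝ :=
  fun y => if y = x then 1 else 0

/-- Worst-case continuous-time distance `d_c(t)`. -/
noncomputable def contDistMax {Ω : Type*} [Fintype Ω] [DecidableEq Ω] (P : Matrix Ω Ω ℝ)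
    (pi : Ω → ℝ) (t : ℝ) : ℝ :=
  ⨆ x : Ω, contDist P pi t (deltaMass x)

/-- Worst-case lazy distance `d_L(t)`. -/
noncomputable def lazyDistMax {Ω : Type*} [Fintype Ω] [DecidableEq Ω] (P : Matrix Ω Ω ℝ)
    (pi : Ω → ℝ) (t : ℝ) : ℝ :=
  ⨆ x : Ω, lazyDist P pi t (deltaMass x)

/-- Worst-case averaged distance `d_ave(t)`. -/
noncomputable def aveDistMax {Ω : Type*} [Fintype Ω] [DecidableEq Ω] (P : Matrix Ω Ω ℝ)
    (pi : Ω → ℝ) (t : ℝ) : ℝ :=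
  ⨆ x : Ω, aveDist P pi t (deltaMass x)

/-- `φ_{α,C}(t) = t + ⌈C t^{(1+2α)/2} √(α log t)⌉`. -/
noncomputable def phiAC (α C t : ℝ) : ℝ :=
  t + ((⌈C * t ^ ((1 + 2 * α) / 2) * Real.sqrt (α * Real.log t)⌉ : ℤ) : ℝ)

/-- `ψ_{α,C}(x) = min (1, x + C |log(2x)|^{-α})`. -/
noncomputable def psiAC (α C x : ℝ) : ℝ :=
  min 1 (x + C * |Real.log (2 * x)| ^ (-α))

/-- `t_c(ε)`, the `ε`-mixing time of the continuous-time chain. -/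
noncomputable def contMix {Ω : Type*} [Fintype Ω] [DecidableEq Ω] (P : Matrix Ω Ω ℝ)
    (pi : Ω → ℝ) (ε : ℝ) : ℝ :=
  sInf {t : ℝ | 0 ≤ t ∧ contDistMax P pi t ≤ ε}

/-- `t_L(ε)`, the `ε`-mixing time of the lazy chain. -/
noncomputable def lazyMix {Ω : Type*} [Fintype Ω] [DecidableEq Ω] (P : Matrix Ω Ω ℝ)
    (pi : Ω → ℝ) (ε : ℝ) : ℕ :=
  sInf {t : ℕ | lazyDistMax P pi t ≤ ε}

/-- `t_ave(ε)`, the `ε`-mixing time of the averaged chain. -/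
noncomputable def aveMix {Ω : Type*} [Fintype Ω] [DecidableEq Ω] (P : Matrix Ω Ω ℝ)
    (pi : Ω → ℝ) (ε : ℝ) : ℕ :=
  sInf {t : ℕ | aveDistMax P pi t ≤ ε}


lemma aux_sum1 (q : ℝ) (N : ℕ) :
    ∑ j ∈ Finset.range N, ((j : ℝ) + 1) * (q ^ j * (1 - q) ^ 2) =
      1 - q ^ N * (1 + N * (1 - q)) := by
  induction N with
  | zero => simp
  | succ n ih => rw [Finset.sum_range_succ, ih]; push_cast; ring

lemma aux_sum3 (q : ℝ) (N : ℕ) :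
    ∑ j ∈ Finset.range N, ((j : ℝ) + 1) * (j + 2) * (j + 3) * (q ^ j * (1 - q) ^ 4) =
      6 - q ^ N * (6 + 6 * N * (1 - q) + 3 * N * (N + 1) * (1 - q) ^ 2
        + N * (N + 1) * (N + 2) * (1 - q) ^ 3) := by
  induction N with
  | zero => simp
  | succ n ih => rw [Finset.sum_range_succ, ih]; push_cast; ring

lemma aux_sum1_le (q : ℝ) (h0 : 0 ≤ q) (h1 : q ≤ 1) (N : ℕ) :
    ∑ j ∈ Finset.range N, ((j : ℝ) + 1) * (q ^ j * (1 - q) ^ 2) ≤ 1 := by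
  rw [aux_sum1]
  have : 0 ≤ 1 - q := by linarith
  have : 0 ≤ q ^ N * (1 + N * (1 - q)) := by positivity
  linarith

lemma aux_sum3_le (q : ℝ) (h0 : 0 ≤ q) (h1 : q ≤ 1) (N : ℕ) :
    ∑ j ∈ Finset.range N, ((j : ℝ) + 1) ^ 3 * (q ^ j * (1 - q) ^ 4) ≤ 6 := by
  have h2 : 0 ≤ 1 - q := by linarith
  calc _ ≤ ∑ j ∈ Finset.range N, ((j : ℝ) + 1) * (j + 2) * (j + 3) * (q ^ j * (1 - q) ^ 4) := by
        apply Finset.sum_le_sum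
        intro j _
        apply mul_le_mul_of_nonneg_right _ (by positivity)
        have : (0 : ℝ) ≤ j := by positivity
        nlinarith [mul_nonneg this this]
    _ ≤ 6 := by
        rw [aux_sum3]
        have : 0 ≤ q ^ N * (6 + 6 * N * (1 - q) + 3 * N * (N + 1) * (1 - q) ^ 2
          + N * (N + 1) * (N + 2) * (1 - q) ^ 3) := by positivity
        linarith

/-- Pointwise telescoping bound. -/
lemma aux_tele (w : ℕ → ℝ) (t : ℕ) :
    ((t : ℝ) + 1) ^ 2 * (w (t + 2) - w t) ^ 2 ≤
      (w 2 - w 0) ^ 2 + 4 * (w 3 - w 1) ^ 2 +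
      ∑ j ∈ Finset.range t, (54 * ((j : ℝ) + 1) ^ 3 * (w (j + 4) - 2 * w (j + 2) + w j) ^ 2
        + 15 * ((j : ℝ) + 1) * (w (j + 2) - w j) ^ 2) := by
  induction t using Nat.twoStepInduction with
  | zero => simp; positivity
  | one => 
    rw [Finset.sum_range_one]
    norm_num
    nlinarith [sq_nonneg (w 2 - w 0), sq_nonneg (w 4 - 2 * w 2 + w 0)]
  | more t ih _ =>
    rw [Finset.sum_range_succ, Finset.sum_range_succ]
    have hl : (0 : ℝ) ≤ 54 * (((t + 1 : ℕ) : ℝ) + 1) ^ 3 *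
        (w (t + 1 + 4) - 2 * w (t + 1 + 2) + w (t + 1)) ^ 2
        + 15 * (((t + 1 : ℕ) : ℝ) + 1) * (w (t + 1 + 2) - w (t + 1)) ^ 2 := by positivity
    have key : (((t + 2 : ℕ) : ℝ) + 1) ^ 2 * (w (t + 2 + 2) - w (t + 2)) ^ 2 ≤
        ((t : ℝ) + 1) ^ 2 * (w (t + 2) - w t) ^ 2 +
        (54 * ((t : ℝ) + 1) ^ 3 * (w (t + 4) - 2 * w (t + 2) + w t) ^ 2
        + 15 * ((t : ℝ) + 1) * (w (t + 2) - w t) ^ 2) := by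
      obtain ⟨d, hd⟩ : ∃ d, d = w (t + 2) - w t := ⟨_, rfl⟩
      obtain ⟨e, he⟩ : ∃ e, e = w (t + 4) - 2 * w (t + 2) + w t := ⟨_, rfl⟩
      have h3 : w (t + 2 + 2) - w (t + 2) = d + e := by rw [hd, he]; ring_nf
      rw [h3, ← hd, ← he]
      push_cast
      have ht : (0 : ℝ) ≤ t := by positivity
      generalize (t : ℝ) = r at ht
      have a1 : 2 * (r + 3) ^ 2 * (e * d) ≤ (r + 3) ^ 3 * e ^ 2 + (r + 3) * d ^ 2 := by
        have : 0 ≤ (r + 3) * ((r + 3) * e - d) ^ 2 := by positivity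
        nlinarith
      have a2 : (r + 3) ^ 2 * e ^ 2 + (r + 3) ^ 3 * e ^ 2 ≤ 54 * (r + 1) ^ 3 * e ^ 2 := by
        rw [← add_mul]
        apply mul_le_mul_of_nonneg_right _ (sq_nonneg e)
        nlinarith [mul_nonneg ht ht, mul_nonneg (mul_nonneg ht ht) ht]
      have a3 : (r + 3) * d ^ 2 + 4 * (r + 2) * d ^ 2 ≤ 15 * (r + 1) * d ^ 2 := by
        rw [← add_mul]
        apply mul_le_mul_of_nonneg_right _ (sq_nonneg d)
        linarith
      have a4 : (r + 2 + 1) ^ 2 * (d + e) ^ 2 = (r + 1) ^ 2 * d ^ 2 + ((r + 3) ^ 2 * e ^ 2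
          + 2 * (r + 3) ^ 2 * (e * d) + 4 * (r + 2) * d ^ 2) := by ring
      rw [a4]; linarith
    linarith

/-- Spectral representation. -/
lemma aux_spec {Ω : Type} [Fintype Ω] [DecidableEq Ω] (P : Matrix Ω Ω ℝ) (p : Ω → ℝ)
    (h : IsRevMC P p) (g : Ω → ℝ) :
    ∃ c l : Ω → ℝ, (∀ i, 0 ≤ c i) ∧ (∀ i, l i ^ 2 ≤ 1) ∧ ∀ (m : ℕ) (a b d : ℝ),
      ∑ x, p x * (a * ((P ^ (m + 4)) *ᵥ g) x + b * ((P ^ (m + 2)) *ᵥ g) x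
        + d * ((P ^ m) *ᵥ g) x) ^ 2 =
      ∑ i, c i * (a * l i ^ (m + 4) + b * l i ^ (m + 2) + d * l i ^ m) ^ 2 := by
  obtain ⟨⟨⟨hP0, hP1⟩, -, ⟨hp0, -⟩, -⟩, hrev⟩ := h
  let S : Matrix Ω Ω ℝ := Matrix.of fun x y => √(P x y * P y x)
  have hSym : S.IsHermitian := by
    ext x y
    simp [S, Matrix.conjTranspose_apply, mul_comm]
  have hS1 : ∀ x y, √(p x) * P x y = S x y * √(p y) := by
    intro x y
    have h1 : P x y * P y x * p y = P x y ^ 2 * p x := by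
      have := hrev x y
      linear_combination (-P x y) * this
    simp only [S, Matrix.of_apply]
    rw [← Real.sqrt_mul (mul_nonneg (hP0 _ _) (hP0 _ _)), h1,
      Real.sqrt_mul (sq_nonneg _), Real.sqrt_sq (hP0 _ _), mul_comm]
  let u : ℕ → Ω → ℝ := fun m x => √(p x) * ((P ^ m) *ᵥ g) x
  have hu : ∀ m, u (m + 1) = S *ᵥ u m := by
    intro m
    ext x
    simp only [u]
    rw [pow_succ', ← Matrix.mulVec_mulVec]
    simp only [Matrix.mulVec, dotProduct] at *
    rw [Finset.mul_sum]
    refine Finset.sum_congr rfl fun y _ => ?_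
    rw [← mul_assoc, hS1]; ring
  let B := hSym.eigenvectorBasis
  let l := hSym.eigenvalues
  have hB : ∀ i, S *ᵥ (B i).ofLp = l i • (B i).ofLp := hSym.mulVec_eigenvectorBasis
  have hS : Sᵀ = S := by
    ext x y; simp [S, mul_comm]
  have hip : ∀ i m, (B i).ofLp ⬝ᵥ u m = l i ^ m * ((B i).ofLp ⬝ᵥ u 0) := by
    intro i m
    induction m with
    | zero => simp
    | succ m ih =>
      rw [hu, Matrix.dotProduct_mulVec, ← Matrix.mulVec_transpose, hS, hB, smul_dotProduct, ih,
        smul_eq_mul]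
      ring
  have hpars : ∀ w : Ω → ℝ, ∑ i, ((B i).ofLp ⬝ᵥ w) ^ 2 = ∑ x, w x ^ 2 := by
    intro w
    have h1 := B.sum_sq_norm_inner_right (WithLp.toLp 2 w)
    rw [EuclideanSpace.norm_sq_eq] at h1
    simpa [EuclideanSpace.inner_eq_star_dotProduct, dotProduct_comm] using h1
  have hnorm : ∀ i, ∑ x, (B i).ofLp x ^ 2 = 1 := by
    intro i
    have h1 := B.orthonormal.1 i
    have h2 := EuclideanSpace.norm_sq_eq (B i)
    rw [h1] at h2
    simpa using h2.symm
  have hl : ∀ i, |l i| ≤ 1 := by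
    intro i
    set v := (B i).ofLp with hv
    have h1 : l i = ∑ x, ∑ y, v x * (S x y * v y) := by
      have : v ⬝ᵥ (S *ᵥ v) = l i := by
        rw [hB, dotProduct_smul, smul_eq_mul]
        have : v ⬝ᵥ v = 1 := by
          rw [← hnorm i]; simp [dotProduct, hv, sq]
        rw [this, mul_one]
      rw [← this]
      simp [Matrix.mulVec, dotProduct, Finset.mul_sum]
    have h2 : ∀ x y, |v x * (S x y * v y)| ≤ (v x ^ 2 * P x y + v y ^ 2 * P y x) / 2 := by
      intro x y
      have e1 : S x y = √(P x y) * √(P y x) := by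
        simp only [S, Matrix.of_apply]; exact Real.sqrt_mul (hP0 _ _) _
      have e2 := Real.sq_sqrt (hP0 x y)
      have e3 := Real.sq_sqrt (hP0 y x)
      rw [e1, abs_le]
      constructor
      · nlinarith [sq_nonneg (v x * √(P x y) + v y * √(P y x))]
      · nlinarith [sq_nonneg (v x * √(P x y) - v y * √(P y x))]
    rw [h1]
    calc _ ≤ ∑ x, ∑ y, |v x * (S x y * v y)| :=
          (Finset.abs_sum_le_sum_abs _ _).trans
            (Finset.sum_le_sum fun x _ => Finset.abs_sum_le_sum_abs _ _)
      _ ≤ ∑ x, ∑ y, (v x ^ 2 * P x y + v y ^ 2 * P y x) / 2 :=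
          Finset.sum_le_sum fun x _ => Finset.sum_le_sum fun y _ => h2 x y
      _ = 1 := by
          simp only [← Finset.sum_div, Finset.sum_add_distrib]
          rw [Finset.sum_comm (f := fun x y => v y ^ 2 * P y x)]
          simp only [← Finset.mul_sum, hP1, mul_one]
          rw [hnorm i]; norm_num
  refine ⟨fun i => ((B i).ofLp ⬝ᵥ u 0) ^ 2, l, fun i => sq_nonneg _, fun i => ?_, ?_⟩
  · rw [← sq_abs]; exact pow_le_one₀ (abs_nonneg _) (hl i)
  · intro m a b d
    have h1 := hpars (a • u (m + 4) + b • u (m + 2) + d • u m)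
    calc _ = ∑ x, ((a • u (m + 4) + b • u (m + 2) + d • u m) x) ^ 2 := by
          refine Finset.sum_congr rfl fun x _ => ?_
          simp only [u, Pi.add_apply, Pi.smul_apply, smul_eq_mul]
          nth_rewrite 1 [← Real.sq_sqrt (hp0 x)]
          ring
      _ = _ := by
          rw [← h1]
          refine Finset.sum_congr rfl fun i _ => ?_
          rw [dotProduct_add, dotProduct_add, dotProduct_smul, dotProduct_smul, dotProduct_smul,
            hip i (m + 4), hip i (m + 2), hip i m]
          simp only [smul_eq_mul]
          ring

lemma aux_main {Ω : Type} [Fintype Ω] [DecidableEq Ω] (P : Matrix Ω Ω ℝ) (p : Ω → ℝ)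
    (h : IsRevMC P p) (g : Ω → ℝ) :
    ∑ x, p x * (⨆ t : ℕ, ((t : ℝ) + 1) ^ 2 *
      |(((P ^ (t + 2)) *ᵥ g) x - ((P ^ t) *ᵥ g) x) / 2| ^ 2) ≤ 344 * ∑ x, p x * g x ^ 2 := by
  have hp0 : ∀ x, 0 ≤ p x := h.1.2.2.1.1
  obtain ⟨c, l, hc, hl, hcl⟩ := aux_spec P p h g
  let w : Ω → ℕ → ℝ := fun x m => ((P ^ m) *ᵥ g) x
  have hD : ∀ m, ∑ x, p x * (w x (m + 2) - w x m) ^ 2 =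
      ∑ i, c i * ((l i ^ 2) ^ m * (1 - l i ^ 2) ^ 2) := by
    intro m
    have := hcl m 0 1 (-1)
    refine Eq.trans (Finset.sum_congr rfl fun x _ => ?_)
      (this.trans (Finset.sum_congr rfl fun i _ => ?_))
    · simp only [w]; ring
    · ring
  have hE : ∀ m, ∑ x, p x * (w x (m + 4) - 2 * w x (m + 2) + w x m) ^ 2 =
      ∑ i, c i * ((l i ^ 2) ^ m * (1 - l i ^ 2) ^ 4) := by
    intro m
    have := hcl m 1 (-2) 1
    refine Eq.trans (Finset.sum_congr rfl fun x _ => ?_)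
      (this.trans (Finset.sum_congr rfl fun i _ => ?_))
    · simp only [w]; ring
    · ring
  have hN : ∑ x, p x * g x ^ 2 = ∑ i, c i := by
    have := hcl 0 0 0 1
    simpa using this
  let F : Ω → ℕ → ℝ := fun x N => (w x 2 - w x 0) ^ 2 + 4 * (w x 3 - w x 1) ^ 2 +
      ∑ j ∈ Finset.range N,
        (54 * ((j : ℝ) + 1) ^ 3 * (w x (j + 4) - 2 * w x (j + 2) + w x j) ^ 2
        + 15 * ((j : ℝ) + 1) * (w x (j + 2) - w x j) ^ 2)
  have hF0 : ∀ x N, 0 ≤ F x N := fun x N => by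
    simp only [F]; positivity
  have hFm : ∀ x, Monotone (fun N => p x * F x N) := by
    intro x
    apply monotone_nat_of_le_succ
    intro N
    apply mul_le_mul_of_nonneg_left _ (hp0 x)
    simp only [F, Finset.sum_range_succ]
    have : (0 : ℝ) ≤ 54 * ((N : ℝ) + 1) ^ 3 * (w x (N + 4) - 2 * w x (N + 2) + w x N) ^ 2
        + 15 * ((N : ℝ) + 1) * (w x (N + 2) - w x N) ^ 2 := by positivity
    linarith
  have hFb : ∀ N, ∑ x, p x * F x N ≤ 344 * ∑ x, p x * g x ^ 2 := by
    intro N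
    have e1 : ∑ x, p x * F x N = ∑ x, p x * (w x (0 + 2) - w x 0) ^ 2
        + 4 * ∑ x, p x * (w x (1 + 2) - w x 1) ^ 2
        + ∑ j ∈ Finset.range N, (54 * ((j : ℝ) + 1) ^ 3 *
            ∑ x, p x * (w x (j + 4) - 2 * w x (j + 2) + w x j) ^ 2
          + 15 * ((j : ℝ) + 1) * ∑ x, p x * (w x (j + 2) - w x j) ^ 2) := by
      simp only [F, Finset.mul_sum, ← Finset.sum_add_distrib]
      rw [Finset.sum_comm, ← Finset.sum_add_distrib]
      refine Finset.sum_congr rfl fun x _ => ?_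
      rw [mul_add, Finset.mul_sum]
      congr 1
      · ring
      · refine Finset.sum_congr rfl fun j _ => ?_
        ring
    have e2 : ∑ x, p x * F x N = ∑ i, c i * ((1 - l i ^ 2) ^ 2 + 4 * (l i ^ 2 * (1 - l i ^ 2) ^ 2)
        + (54 * ∑ j ∈ Finset.range N, ((j : ℝ) + 1) ^ 3 * ((l i ^ 2) ^ j * (1 - l i ^ 2) ^ 4)
        + 15 * ∑ j ∈ Finset.range N, ((j : ℝ) + 1) * ((l i ^ 2) ^ j * (1 - l i ^ 2) ^ 2))) := by
      rw [e1]
      simp only [hD, hE]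
      simp only [Finset.mul_sum, ← Finset.sum_add_distrib]
      rw [Finset.sum_comm, ← Finset.sum_add_distrib]
      refine Finset.sum_congr rfl fun i _ => ?_
      rw [mul_add, Finset.mul_sum]
      congr 1
      · ring
      · refine Finset.sum_congr rfl fun j _ => ?_
        ring
    rw [e2, hN, Finset.mul_sum]
    refine Finset.sum_le_sum fun i _ => ?_
    rw [mul_comm 344]
    apply mul_le_mul_of_nonneg_left _ (hc i)
    have q0 := sq_nonneg (l i)
    have q1 := hl i
    have s1 := aux_sum1_le _ q0 q1 N
    have s3 := aux_sum3_le _ q0 q1 N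
    have r1 : (1 - l i ^ 2) ^ 2 ≤ 1 := pow_le_one₀ (by linarith) (by linarith)
    have r2 : l i ^ 2 * (1 - l i ^ 2) ^ 2 ≤ 1 := mul_le_one₀ q1 (sq_nonneg _) r1
    linarith
  have hbd : ∀ x, BddAbove (Set.range fun N => p x * F x N) := by
    intro x
    refine ⟨344 * ∑ x, p x * g x ^ 2, ?_⟩
    rintro _ ⟨N, rfl⟩
    exact (Finset.single_le_sum (f := fun x => p x * F x N)
      (fun y _ => mul_nonneg (hp0 y) (hF0 y N)) (Finset.mem_univ x)).trans (hFb N)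
  have hlim : Tendsto (fun N => ∑ x, p x * F x N) atTop (nhds (∑ x, ⨆ N, p x * F x N)) :=
    tendsto_finsetSum _ fun x _ => tendsto_atTop_ciSup (hFm x) (hbd x)
  refine le_trans (Finset.sum_le_sum fun x _ => ?_) (le_of_tendsto' hlim hFb)
  rw [Real.mul_iSup_of_nonneg (hp0 x)]
  refine ciSup_mono (hbd x) fun t => ?_
  apply mul_le_mul_of_nonneg_left _ (hp0 x)
  have := aux_tele (w x) t
  refine le_trans ?_ this
  rw [sq_abs]
  apply mul_le_mul_of_nonneg_left _ (by positivity)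
  simp only [w]
  rw [div_pow]
  have := sq_nonneg (((P ^ (t + 2)) *ᵥ g) x - ((P ^ t) *ᵥ g) x)
  linarith

/-- **Corollary 2.3 of Hermon–Peres, second inequality (Stein's maximal inequality for the
averaged chain).** There is an absolute constant `C` such that for every finite irreducible
reversible Markov chain and every `f : Ω → ℝ`,
`E_π[sup_{t ≥ 0} (t+1)² |Δ A_t f|²] ≤ C Var_π f`, where `Δ A_t f = (P^{t+2} - P^t) f / 2`. -/
theorem maximal_inequality_ave :
    ∃ C : ℝ, 0 < C ∧
      ∀ (Ω : Type) [Fintype Ω] [DecidableEq Ω]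
        (P : Matrix Ω Ω ℝ) (pi : Ω → ℝ), IsRevMC P pi →
        ∀ f : Ω → ℝ,
          ∑ x, pi x *
              (⨆ t : ℕ, ((t : ℝ) + 1) ^ 2 *
                |(((P ^ (t + 2)) *ᵥ f) x - ((P ^ t) *ᵥ f) x) / 2| ^ 2) ≤
            C * ∑ x, pi x * (f x - ∑ y, pi y * f y) ^ 2 := by
  refine ⟨344, by norm_num, ?_⟩
  intro Ω _ _ P pi h f
  have key := aux_main P pi h (fun x => f x - ∑ y, pi y * f y)
  have hrow : ∀ t : ℕ, (P ^ t) *ᵥ (fun _ => (1 : ℝ)) = fun _ => 1 := by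
    intro t
    induction t with
    | zero => simp
    | succ t ih =>
      rw [pow_succ, ← Matrix.mulVec_mulVec]
      have : P *ᵥ (fun _ => (1 : ℝ)) = fun _ => 1 := by
        ext x
        simp [Matrix.mulVec, dotProduct, h.1.1.2 x]
      rw [this, ih]
  have hsub : ∀ (t : ℕ) (x : Ω), ((P ^ t) *ᵥ (fun x => f x - ∑ y, pi y * f y)) x =
      ((P ^ t) *ᵥ f) x - ∑ y, pi y * f y := by
    intro t x
    have e : (fun x => f x - ∑ y, pi y * f y) = f - (∑ y, pi y * f y) • (fun _ => (1 : ℝ)) := by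
      ext x; simp
    rw [e, Matrix.mulVec_sub, Matrix.mulVec_smul, hrow]
    simp
  simp only [hsub, sub_sub_sub_cancel_right] at key
  exact key
end

section
/- There exists an absolute constant C such that for every finite irreducible reversible Markov chain (Ω,P,π), every probability measure μ on Ω, every real t ≥ 1 and every s with 2 ≤ s ≤ e^t: d_L(t + m, μ) ≤ d_c(t/2, μ) + 2/s² + √(C/s), where r := 2√(2t log s) and m := ⌈r(√s + 1)⌉. -/
open Matrix Filter Asymptotics

section Helpers

set_option linter.unusedSectionVars false

variable {Ω : Type} [Fintype Ω] [DecidableEq Ω]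

/-- weighted inner product -/
def ipw (pi : Ω → ℝ) (g h : Ω → ℝ) : ℝ := ∑ x, pi x * g x * h x

lemma scalar_mono (n : ℕ) : ∀ (e : ℕ → ℝ), (∀ i, 0 ≤ e i) → (∀ i, e (i+1) ≤ e i) →
    (∀ i, 0 ≤ e i - 2 * e (i+1) + e (i+2)) →
    (∀ i, e (i+1) - 2 * e (i+2) + e (i+3) ≤ e i - 2 * e (i+1) + e (i+2)) →
    ((n:ℝ)+1) * (e n - 2 * e (n+1) + e (n+2)) ≤ e 0 - e 1 ∧
    ((n:ℝ)+1) * (n+2) / 2 * (e n - 2 * e (n+1) + e (n+2)) ≤ e 0 := by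
  induction n with
  | zero =>
    intro e h0 h1 h2 h3
    have a0 := h0 1
    have a1 := h0 0
    have a2 := h1 0
    have a3 := h1 1
    norm_num at *
    constructor <;> linarith
  | succ n ih =>
    intro e h0 h1 h2 h3
    obtain ⟨i1, i2⟩ := ih (fun i => e (i+1)) (fun i => h0 _) (fun i => h1 _) (fun i => h2 _)
      (fun i => h3 _)
    simp only [zero_add] at i1 i2
    have anti : Antitone (fun i => e i - 2 * e (i+1) + e (i+2)) :=
      antitone_nat_of_succ_le (fun i => h3 i)
    have h4 := anti (Nat.zero_le (n+1))
    simp only [zero_add] at h4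
    have e1 : n + 1 + 1 = n + 2 := rfl
    have e2 : n + 1 + 2 = n + 3 := rfl
    have e3 : n + 2 + 1 = n + 3 := rfl
    rw [show (1:ℕ)+1 = 2 from rfl] at i1
    simp only [e1, e2, e3] at *
    have j1 : ((n:ℝ)+1+1) * (e (n+1) - 2 * e (n+2) + e (n+3)) ≤ e 0 - e 1 := by
      have : ((n:ℝ)+1+1) * (e (n+1) - 2 * e (n+2) + e (n+3)) =
        ((n:ℝ)+1) * (e (n+1) - 2 * e (n+2) + e (n+3)) + (e (n+1) - 2 * e (n+2) + e (n+3)) := by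
        ring
      linarith
    push_cast
    refine ⟨j1, ?_⟩
    have : ((n:ℝ)+1+1) * (n+1+2) / 2 * (e (n+1) - 2 * e (n+2) + e (n+3)) =
      ((n:ℝ)+1) * (n+2) / 2 * (e (n+1) - 2 * e (n+2) + e (n+3)) +
      ((n:ℝ)+1+1) * (e (n+1) - 2 * e (n+2) + e (n+3)) := by ring
    linarith

lemma ipw_sub_left (pi g g' h : Ω → ℝ) : ipw pi (g - g') h = ipw pi g h - ipw pi g' h := by
  simp only [ipw, Pi.sub_apply, ← Finset.sum_sub_distrib]
  exact Finset.sum_congr rfl fun x _ => by ring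

lemma ipw_sub_right (pi g h h' : Ω → ℝ) : ipw pi g (h - h') = ipw pi g h - ipw pi g h' := by
  simp only [ipw, Pi.sub_apply, ← Finset.sum_sub_distrib]
  exact Finset.sum_congr rfl fun x _ => by ring

lemma ipw_add_left (pi g g' h : Ω → ℝ) : ipw pi (g + g') h = ipw pi g h + ipw pi g' h := by
  simp only [ipw, Pi.add_apply, ← Finset.sum_add_distrib]
  exact Finset.sum_congr rfl fun x _ => by ring

lemma ipw_smul_left (pi g h : Ω → ℝ) (c : ℝ) : ipw pi (c • g) h = c * ipw pi g h := by
  simp only [ipw, Pi.smul_apply, smul_eq_mul, Finset.mul_sum]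
  exact Finset.sum_congr rfl fun x _ => by ring

lemma ipw_comm (pi g h : Ω → ℝ) : ipw pi g h = ipw pi h g :=
  Finset.sum_congr rfl fun x _ => by ring

lemma ipw_self_nonneg {pi : Ω → ℝ} (hpi : ∀ x, 0 ≤ pi x) (g : Ω → ℝ) : 0 ≤ ipw pi g g :=
  Finset.sum_nonneg fun x _ => by
    rw [mul_assoc]; exact mul_nonneg (hpi x) (mul_self_nonneg _)

lemma ipw_P_symm {P : Matrix Ω Ω ℝ} {pi : Ω → ℝ} (hr : IsReversible P pi) (g h : Ω → ℝ) :
    ipw pi (P *ᵥ g) h = ipw pi g (P *ᵥ h) := by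
  simp only [ipw, mulVec, dotProduct, Finset.mul_sum, Finset.sum_mul]
  rw [Finset.sum_comm]
  refine Finset.sum_congr rfl fun x _ => Finset.sum_congr rfl fun y _ => ?_
  have := hr x y
  linear_combination (-(g x * h y)) * this

lemma ipw_P_quad {P : Matrix Ω Ω ℝ} {pi : Ω → ℝ} (hP : IsStochastic P) (hr : IsReversible P pi)
    (g : Ω → ℝ) (c : ℝ) :
    ∑ x, ∑ y, pi x * P x y * (g x + c * g y) ^ 2 =
      (1 + c ^ 2) * ipw pi g g + 2 * c * ipw pi (P *ᵥ g) g := by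
  have h1 : ∑ x, ∑ y, pi x * P x y * (g x * g x) = ipw pi g g := by
    simp only [ipw]
    refine Finset.sum_congr rfl fun x _ => ?_
    rw [← Finset.sum_mul, ← Finset.mul_sum, hP.2 x]; ring
  have h2 : ∑ x, ∑ y, pi x * P x y * (g y * g y) = ipw pi g g := by
    rw [← h1, Finset.sum_comm]
    refine Finset.sum_congr rfl fun x _ => Finset.sum_congr rfl fun y _ => ?_
    rw [hr x y]
  have h3 : ∑ x, ∑ y, pi x * P x y * (g x * g y) = ipw pi (P *ᵥ g) g := by
    simp only [ipw, mulVec, dotProduct, Finset.mul_sum, Finset.sum_mul]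
    refine Finset.sum_congr rfl fun x _ => Finset.sum_congr rfl fun y _ => ?_
    ring
  calc _ = ∑ x, ∑ y, (pi x * P x y * (g x * g x) + c ^ 2 * (pi x * P x y * (g y * g y)) +
        2 * c * (pi x * P x y * (g x * g y))) :=
        Finset.sum_congr rfl fun x _ => Finset.sum_congr rfl fun y _ => by ring
    _ = _ := by
        simp only [Finset.sum_add_distrib, ← Finset.mul_sum, h1, h2, h3]; ring

lemma lazy_mulVec (P : Matrix Ω Ω ℝ) (g : Ω → ℝ) :
    lazyM P *ᵥ g = (2:ℝ)⁻¹ • (g + P *ᵥ g) := by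
  rw [lazyM, smul_mulVec, add_mulVec, one_mulVec]

lemma lazy_symm {P : Matrix Ω Ω ℝ} {pi : Ω → ℝ} (hr : IsReversible P pi) (g h : Ω → ℝ) :
    ipw pi (lazyM P *ᵥ g) h = ipw pi g (lazyM P *ᵥ h) := by
  rw [lazy_mulVec, lazy_mulVec, ipw_smul_left, ipw_comm _ g, ipw_smul_left, ipw_add_left,
    ipw_add_left, ipw_P_symm hr, ipw_comm _ h, ipw_comm _ (P *ᵥ h)]

lemma quad_nonneg {P : Matrix Ω Ω ℝ} {pi : Ω → ℝ} (hP : IsStochastic P) (hpi : ∀ x, 0 ≤ pi x)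
    (g : Ω → ℝ) (c : ℝ) : 0 ≤ ∑ x, ∑ y, pi x * P x y * (g x + c * g y) ^ 2 :=
  Finset.sum_nonneg fun x _ => Finset.sum_nonneg fun y _ =>
    mul_nonneg (mul_nonneg (hpi x) (hP.1 x y)) (sq_nonneg _)

lemma lazy_pos {P : Matrix Ω Ω ℝ} {pi : Ω → ℝ} (hP : IsStochastic P) (hpi : ∀ x, 0 ≤ pi x)
    (hr : IsReversible P pi) (g : Ω → ℝ) : 0 ≤ ipw pi (lazyM P *ᵥ g) g := by
  have h1 := quad_nonneg hP hpi g 1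
  rw [ipw_P_quad hP hr] at h1
  rw [lazy_mulVec, ipw_smul_left, ipw_add_left]
  linarith

lemma lazy_le {P : Matrix Ω Ω ℝ} {pi : Ω → ℝ} (hP : IsStochastic P) (hpi : ∀ x, 0 ≤ pi x)
    (hr : IsReversible P pi) (g : Ω → ℝ) : ipw pi (lazyM P *ᵥ g) g ≤ ipw pi g g := by
  have h1 := quad_nonneg hP hpi g (-1)
  rw [ipw_P_quad hP hr] at h1
  rw [lazy_mulVec, ipw_smul_left, ipw_add_left]
  linarith

lemma lazy_le' {P : Matrix Ω Ω ℝ} {pi : Ω → ℝ} (hP : IsStochastic P) (hpi : ∀ x, 0 ≤ pi x)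
    (hr : IsReversible P pi) (g : Ω → ℝ) :
    ipw pi (lazyM P *ᵥ (lazyM P *ᵥ g)) g ≤ ipw pi (lazyM P *ᵥ g) g := by
  have h1 := lazy_pos hP hpi hr (g - lazyM P *ᵥ g)
  have h2 := lazy_le hP hpi hr (lazyM P *ᵥ g)
  rw [mulVec_sub, ipw_sub_left, ipw_sub_right, ipw_sub_right] at h1
  have h3 := lazy_symm hr (lazyM P *ᵥ g) g
  have h4 := ipw_comm pi (lazyM P *ᵥ g) (lazyM P *ᵥ g)
  linarith

lemma pow_succ_mulVec' (Q : Matrix Ω Ω ℝ) (n : ℕ) (g : Ω → ℝ) :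
    Q ^ (n+1) *ᵥ g = Q *ᵥ (Q ^ n *ᵥ g) := by
  rw [pow_succ', mulVec_mulVec]

lemma lazy_pow_symm {P : Matrix Ω Ω ℝ} {pi : Ω → ℝ} (hr : IsReversible P pi) (n : ℕ) :
    ∀ (g h : Ω → ℝ), ipw pi (lazyM P ^ n *ᵥ g) h = ipw pi g (lazyM P ^ n *ᵥ h) := by
  induction n with
  | zero => intro g h; simp
  | succ n ih =>
    intro g h
    rw [pow_succ_mulVec', lazy_symm hr, ih, mulVec_mulVec, ← pow_succ]

lemma E_props {P : Matrix Ω Ω ℝ} {pi : Ω → ℝ} (hP : IsStochastic P) (hpi : ∀ x, 0 ≤ pi x)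
    (hr : IsReversible P pi) (g : Ω → ℝ) (n : ℕ) :
    0 ≤ ipw pi (lazyM P ^ n *ᵥ g) g ∧
      ipw pi (lazyM P ^ (n+1) *ᵥ g) g ≤ ipw pi (lazyM P ^ n *ᵥ g) g := by
  obtain ⟨k, hk⟩ := Nat.even_or_odd' n
  have key : ∀ i, ipw pi (lazyM P ^ (k + i) *ᵥ (lazyM P ^ k *ᵥ g)) g =
      ipw pi (lazyM P ^ i *ᵥ (lazyM P ^ k *ᵥ g)) (lazyM P ^ k *ᵥ g) := by
    intro i
    rw [pow_add, ← mulVec_mulVec, lazy_pow_symm hr k]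
  have key2 : ∀ i, ipw pi (lazyM P ^ (2 * k + i) *ᵥ g) g =
      ipw pi (lazyM P ^ i *ᵥ (lazyM P ^ k *ᵥ g)) (lazyM P ^ k *ᵥ g) := by
    intro i
    rw [← key, mulVec_mulVec, ← pow_add]; congr 3; ring
  have k0 := key2 0
  have k1 := key2 1
  have k2 := key2 2
  rw [pow_succ_mulVec' (lazyM P) 1 (lazyM P ^ k *ᵥ g)] at k2
  simp only [add_zero, pow_zero, one_mulVec, pow_one] at k0 k1 k2
  rcases hk with rfl | rfl
  · rw [k0, k1]
    exact ⟨ipw_self_nonneg hpi _, lazy_le hP hpi hr _⟩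
  · rw [add_assoc, k1, one_add_one_eq_two, k2]
    exact ⟨lazy_pos hP hpi hr _, lazy_le' hP hpi hr _⟩

lemma diff_bound {P : Matrix Ω Ω ℝ} {pi : Ω → ℝ} (hP : IsStochastic P) (hpi : ∀ x, 0 ≤ pi x)
    (hr : IsReversible P pi) (f : Ω → ℝ) (hf : ipw pi f f ≤ 1) (j : ℕ) :
    ipw pi (lazyM P ^ (j+1) *ᵥ f - lazyM P ^ j *ᵥ f) (lazyM P ^ (j+1) *ᵥ f - lazyM P ^ j *ᵥ f)
      ≤ (1 / ((j:ℝ)+1)) ^ 2 := by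
  have hE : ∀ i, ipw pi (lazyM P ^ i *ᵥ (f - lazyM P *ᵥ f)) (f - lazyM P *ᵥ f) =
      ipw pi (lazyM P ^ i *ᵥ f) f - 2 * ipw pi (lazyM P ^ (i+1) *ᵥ f) f +
        ipw pi (lazyM P ^ (i+2) *ᵥ f) f := by
    intro i
    have h1 : lazyM P ^ i *ᵥ (lazyM P *ᵥ f) = lazyM P ^ (i+1) *ᵥ f := by
      rw [mulVec_mulVec, ← pow_succ]
    rw [mulVec_sub, h1, ipw_sub_left, ipw_sub_right, ipw_sub_right, ← lazy_symm hr,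
      ← lazy_symm hr, ← pow_succ_mulVec', ← pow_succ_mulVec']
    ring
  have := (scalar_mono (2*j) (fun i => ipw pi (lazyM P ^ i *ᵥ f) f)
    (fun i => (E_props hP hpi hr f i).1) (fun i => (E_props hP hpi hr f i).2)
    (fun i => by
      simp only [← hE]; exact (E_props hP hpi hr _ i).1)
    (fun i => by
      have h1 := hE (i+1)
      have h2 := (E_props hP hpi hr (f - lazyM P *ᵥ f) i).2
      rw [hE i, h1] at h2
      exact h2)).2
  simp only [← hE] at this
  have h5 : ipw pi (lazyM P ^ (j+1) *ᵥ f - lazyM P ^ j *ᵥ f)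
      (lazyM P ^ (j+1) *ᵥ f - lazyM P ^ j *ᵥ f) =
      ipw pi (lazyM P ^ (2*j) *ᵥ (f - lazyM P *ᵥ f)) (f - lazyM P *ᵥ f) := by
    have : lazyM P ^ (j+1) *ᵥ f - lazyM P ^ j *ᵥ f =
      -(lazyM P ^ j *ᵥ (f - lazyM P *ᵥ f)) := by
      rw [mulVec_sub, mulVec_mulVec, ← pow_succ]; abel
    rw [this, two_mul, pow_add, ← mulVec_mulVec, lazy_pow_symm hr j (lazyM P ^ j *ᵥ _)]
    simp [ipw]
  rw [h5]
  simp only [pow_zero, one_mulVec] at this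
  have h6 := (E_props hP hpi hr (f - lazyM P *ᵥ f) (2*j)).1
  set X := ipw pi (lazyM P ^ (2*j) *ᵥ (f - lazyM P *ᵥ f)) (f - lazyM P *ᵥ f)
  push_cast at this
  rw [div_pow, le_div_iff₀ (by positivity)]
  have hj : (0:ℝ) ≤ j := j.cast_nonneg
  have : X * (j * (j+1)) ≥ 0 := by positivity
  nlinarith

lemma diff_l1 {P : Matrix Ω Ω ℝ} {pi : Ω → ℝ} (hP : IsStochastic P) (hpi : IsProbVec pi)
    (hr : IsReversible P pi) (f : Ω → ℝ) (hf : ipw pi f f ≤ 1) (j : ℕ) :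
    ∑ x, pi x * |(lazyM P ^ (j+1) *ᵥ f) x - (lazyM P ^ j *ᵥ f) x| ≤ 1 / ((j:ℝ)+1) := by
  have h := diff_bound hP hpi.1 hr f hf j
  set c : ℝ := 1 / ((j:ℝ)+1) with hc
  have hcpos : 0 < c := by positivity
  set d := lazyM P ^ (j+1) *ᵥ f - lazyM P ^ j *ᵥ f with hd
  have h1 : 2 * c * ∑ x, pi x * |d x| ≤ ipw pi d d + c ^ 2 := by
    calc 2 * c * ∑ x, pi x * |d x| ≤ ∑ x, (pi x * d x * d x + pi x * c ^ 2) := by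
          rw [Finset.mul_sum]
          refine Finset.sum_le_sum fun x _ => ?_
          have := mul_nonneg (hpi.1 x) (sq_nonneg (|d x| - c))
          have h2 : pi x * (|d x| - c) ^ 2 =
              pi x * d x * d x + pi x * c ^ 2 - 2 * c * (pi x * |d x|) := by
            have := sq_abs (d x)
            linear_combination pi x * this
          linarith
      _ = _ := by rw [Finset.sum_add_distrib, ← Finset.sum_mul, hpi.2, one_mul]; rfl
  have h2 : c * ∑ x, pi x * |d x| ≤ c * c := by nlinarith
  exact le_of_mul_le_mul_left h2 hcpos

lemma lazy_stoch {P : Matrix Ω Ω ℝ} (hP : IsStochastic P) : IsStochastic (lazyM P) := by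
  refine ⟨fun x y => ?_, fun x => ?_⟩
  · have := hP.1 x y
    simp only [lazyM, Matrix.smul_apply, Matrix.add_apply, Matrix.one_apply, smul_eq_mul]
    split_ifs <;> positivity
  · simp only [lazyM, Matrix.smul_apply, Matrix.add_apply, smul_eq_mul, ← Finset.mul_sum,
      Finset.sum_add_distrib, hP.2 x, Matrix.one_apply]
    simp; norm_num

lemma pow_stoch {Q : Matrix Ω Ω ℝ} (hQ : IsStochastic Q) (n : ℕ) : IsStochastic (Q ^ n) := by
  induction n with
  | zero =>
    refine ⟨fun x y => ?_, fun x => ?_⟩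
    · simp only [pow_zero, Matrix.one_apply]; split_ifs <;> norm_num
    · simp [Matrix.one_apply]
  | succ n ih =>
    refine ⟨fun x y => ?_, fun x => ?_⟩
    · rw [pow_succ, Matrix.mul_apply]
      exact Finset.sum_nonneg fun z _ => mul_nonneg (ih.1 _ _) (hQ.1 _ _)
    · simp only [pow_succ, Matrix.mul_apply]
      rw [Finset.sum_comm]
      simp only [← Finset.mul_sum, hQ.2, mul_one, ih.2]

lemma vecMul_prob {Q : Matrix Ω Ω ℝ} (hQ : IsStochastic Q) {μ : Ω → ℝ} (hμ : IsProbVec μ) :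
    IsProbVec (μ ᵥ* Q) := by
  refine ⟨fun y => Finset.sum_nonneg fun z _ => mul_nonneg (hμ.1 _) (hQ.1 _ _), ?_⟩
  simp only [vecMul, dotProduct]
  rw [Finset.sum_comm]
  simp only [← Finset.mul_sum, hQ.2, mul_one, hμ.2]

lemma dot_mono {μ g h : Ω → ℝ} (hμ : ∀ x, 0 ≤ μ x) (hgh : ∀ x, g x ≤ h x) : μ ⬝ᵥ g ≤ μ ⬝ᵥ h :=
  Finset.sum_le_sum fun x _ => mul_le_mul_of_nonneg_left (hgh x) (hμ x)

lemma dot_le_one {μ g : Ω → ℝ} (hμ : IsProbVec μ) (hg : ∀ x, g x ≤ 1) : μ ⬝ᵥ g ≤ 1 := by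
  refine (dot_mono hμ.1 hg).trans ?_
  simp [dotProduct, hμ.2]

/-- the TV distance is attained by an indicator -/
lemma tv_attained {μ ν : Ω → ℝ} (hμ : ∑ x, μ x = 1) (hν : ∑ x, ν x = 1) :
    ∃ f : Ω → ℝ, (∀ x, 0 ≤ f x) ∧ (∀ x, f x ≤ 1) ∧ tvDist μ ν = μ ⬝ᵥ f - ν ⬝ᵥ f := by
  refine ⟨fun x => if ν x ≤ μ x then 1 else 0, fun x => ?_, fun x => ?_, ?_⟩
  · dsimp; split_ifs <;> norm_num
  · dsimp; split_ifs <;> norm_num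
  · have h : ∀ x, |μ x - ν x| = 2 * (μ x * (if ν x ≤ μ x then 1 else 0) -
        ν x * (if ν x ≤ μ x then 1 else 0)) - (μ x - ν x) := by
      intro x
      split_ifs with h
      · rw [abs_of_nonneg (by linarith)]; ring
      · rw [abs_of_neg (by linarith)]; ring
    rw [tvDist, Finset.sum_congr rfl fun x _ => h x, Finset.sum_sub_distrib, ← Finset.mul_sum,
      Finset.sum_sub_distrib, Finset.sum_sub_distrib, hμ, hν]
    simp only [dotProduct]; ring

lemma tv_ge {μ ν g : Ω → ℝ} (hμ : ∑ x, μ x = 1) (hν : ∑ x, ν x = 1)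
    (h0 : ∀ x, 0 ≤ g x) (h1 : ∀ x, g x ≤ 1) : μ ⬝ᵥ g - ν ⬝ᵥ g ≤ tvDist μ ν := by
  have h : μ ⬝ᵥ g - ν ⬝ᵥ g = ∑ x, (μ x - ν x) * (g x - 1/2) := by
    simp only [dotProduct]
    have : ∀ x, (μ x - ν x) * (g x - 1/2) = μ x * g x - ν x * g x - (μ x - ν x) / 2 := by
      intro x; ring
    simp only [this, Finset.sum_sub_distrib, ← Finset.sum_div, hμ, hν]; ring
  rw [h, tvDist, Finset.sum_div]
  refine Finset.sum_le_sum fun x _ => ?_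
  refine (le_abs_self _).trans ?_
  rw [abs_mul, div_eq_mul_one_div]
  refine mul_le_mul_of_nonneg_left ?_ (abs_nonneg _)
  rw [abs_le]; constructor <;> linarith [h0 x, h1 x]

open scoped Matrix.Norms.Operator in
lemma hasSum_exp_vec (Q : Matrix Ω Ω ℝ) (μ : Ω → ℝ) (y : Ω) (t : ℝ) :
    HasSum (fun k : ℕ => Real.exp (-t) * t ^ k / (Nat.factorial k) * (μ ᵥ* (Q ^ k)) y)
      ((μ ᵥ* (Real.exp (-t) • NormedSpace.exp (t • Q))) y) := by
  have h := NormedSpace.exp_series_hasSum_exp' (𝕂 := ℝ) (t • Q)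
  let L : Matrix Ω Ω ℝ →ₗ[ℝ] ℝ :=
    { toFun := fun X => (μ ᵥ* X) y
      map_add' := fun X Y => by simp [vecMul_add]
      map_smul' := fun c X => by simp [vecMul_smul] }
  have hL := (h.const_smul (Real.exp (-t))).mapL (LinearMap.toContinuousLinearMap L)
  refine Eq.mp (congrArg (fun F => HasSum F _) ?_) hL
  funext k
  simp only [LinearMap.coe_toContinuousLinearMap', L, LinearMap.coe_mk, AddHom.coe_mk, smul_pow,
    vecMul_smul, Pi.smul_apply, smul_eq_mul]
  ring

open scoped Matrix.Norms.Operator in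
lemma exp_lazy (P : Matrix Ω Ω ℝ) (t : ℝ) :
    Real.exp (-t) • NormedSpace.exp (t • lazyM P) =
      Real.exp (-(t/2)) • NormedSpace.exp ((t/2) • P) := by
  have h1 : t • lazyM P = (t/2) • (1 : Matrix Ω Ω ℝ) + (t/2) • P := by
    rw [lazyM, smul_smul, smul_add]; rfl
  have hc : Commute ((t/2) • (1 : Matrix Ω Ω ℝ)) ((t/2) • P) :=
    ((Commute.one_left P).smul_left _).smul_right _
  have h2 : NormedSpace.exp ((t/2) • (1 : Matrix Ω Ω ℝ)) = Real.exp (t/2) • 1 := by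
    have := NormedSpace.algebraMap_exp_comm (𝕂 := ℝ) (𝔸 := Matrix Ω Ω ℝ) (t/2)
    rw [Algebra.algebraMap_eq_smul_one, Algebra.algebraMap_eq_smul_one] at this
    rw [Real.exp_eq_exp_ℝ]
    exact this.symm
  have h3 : NormedSpace.exp ((t/2) • (1 : Matrix Ω Ω ℝ) + (t/2) • P) =
      NormedSpace.exp ((t/2) • (1 : Matrix Ω Ω ℝ)) * NormedSpace.exp ((t/2) • P) :=
    NormedSpace.exp_add_of_commute hc
  rw [h1, h3, h2, smul_mul_assoc, one_mul, smul_smul,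
    ← Real.exp_add]
  congr 2; ring

lemma hasSum_pois (t c : ℝ) :
    HasSum (fun k : ℕ => Real.exp (-t) * t ^ k / (Nat.factorial k) * Real.exp (c * k))
      (Real.exp (t * (Real.exp c - 1))) := by
  have h := (NormedSpace.expSeries_div_hasSum_exp (𝔸 := ℝ) (t * Real.exp c)).mul_left
    (Real.exp (-t))
  rw [← Real.exp_eq_exp_ℝ, ← Real.exp_add] at h
  have e1 : t * (Real.exp c - 1) = -t + t * Real.exp c := by ring
  rw [e1]
  refine Eq.mp (congrArg (fun F => HasSum F _) ?_) h
  funext k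
  rw [mul_pow, mul_comm c, Real.exp_nat_mul]; ring

lemma main_core {P : Matrix Ω Ω ℝ} {pi : Ω → ℝ} (h : IsRevMC P pi) {μ : Ω → ℝ}
    (hμ : IsProbVec μ) (t θ r : ℝ) (ht : 1 ≤ t) (hθ0 : 0 ≤ θ) (hθ : θ ≤ 1) (N a l : ℕ)
    (hw : ∀ k : ℕ, |(k:ℝ) - t| ≤ r → k + a ≤ N ∧ N ≤ k + a + l) :
    tvDist (μ ᵥ* (lazyM P ^ N)) pi ≤ contDist P pi (t/2) μ +
      2 * Real.exp (t * θ^2 - θ * r) + l / ((a:ℝ) + 1) := by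
  obtain ⟨⟨hP, -, hpi, hst⟩, hr⟩ := h
  have hQ := lazy_stoch hP
  obtain ⟨f, hf0, hf1, hf⟩ := tv_attained (vecMul_prob (pow_stoch hQ N) hμ).2 hpi.2
  have hpQ : ∀ n, pi ᵥ* (lazyM P ^ n) = pi := by
    intro n
    induction n with
    | zero => simp
    | succ n ih =>
      rw [pow_succ, ← vecMul_vecMul, ih, lazyM, vecMul_smul, vecMul_add, vecMul_one, hst]
      ext x; simp; ring
  have hff : ipw pi f f ≤ 1 := by
    calc ipw pi f f ≤ pi ⬝ᵥ (fun _ => 1) := by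
          refine Finset.sum_le_sum fun x _ => ?_
          rw [mul_assoc]
          refine mul_le_mul_of_nonneg_left ?_ (hpi.1 x)
          exact mul_le_one₀ (hf1 x) (hf0 x) (hf1 x)
      _ ≤ 1 := dot_le_one hpi fun _ => le_rfl
  -- values of `Q^n f`
  have hQf0 : ∀ n x, 0 ≤ (lazyM P ^ n *ᵥ f) x := fun n x =>
    Finset.sum_nonneg fun y _ => mul_nonneg ((pow_stoch hQ n).1 x y) (hf0 y)
  have hQf1 : ∀ n x, (lazyM P ^ n *ᵥ f) x ≤ 1 := fun n x =>
    dot_le_one ⟨(pow_stoch hQ n).1 x, (pow_stoch hQ n).2 x⟩ hf1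
  let b : Ω → ℝ := fun x => (lazyM P ^ a *ᵥ f) x +
    ∑ i ∈ Finset.range l, |(lazyM P ^ (a+i+1) *ᵥ f) x - (lazyM P ^ (a+i) *ᵥ f) x|
  let φ : Ω → ℝ := fun x => min 1 (b x)
  have hφ0 : ∀ x, 0 ≤ φ x := fun x => le_min zero_le_one
    (add_nonneg (hQf0 _ _) (Finset.sum_nonneg fun i _ => abs_nonneg _))
  have hφ1 : ∀ x, φ x ≤ 1 := fun x => min_le_left _ _
  have hφ : ∀ i ≤ l, ∀ x, (lazyM P ^ (a+i) *ᵥ f) x ≤ φ x := by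
    intro i hi x
    refine le_min (hQf1 _ _) ?_
    have h1 : (lazyM P ^ (a+i) *ᵥ f) x - (lazyM P ^ a *ᵥ f) x =
        ∑ i ∈ Finset.range i, ((lazyM P ^ (a+i+1) *ᵥ f) x - (lazyM P ^ (a+i) *ᵥ f) x) :=
      (Finset.sum_range_sub (fun i => (lazyM P ^ (a+i) *ᵥ f) x) i).symm
    have h2 : ∑ i ∈ Finset.range i, ((lazyM P ^ (a+i+1) *ᵥ f) x - (lazyM P ^ (a+i) *ᵥ f) x) ≤
        ∑ i ∈ Finset.range l, |(lazyM P ^ (a+i+1) *ᵥ f) x - (lazyM P ^ (a+i) *ᵥ f) x| := by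
      refine (Finset.sum_le_sum fun i _ => le_abs_self _).trans ?_
      exact Finset.sum_le_sum_of_subset_of_nonneg (Finset.range_mono hi)
        fun _ _ _ => abs_nonneg _
    simp only [b]; linarith
  have hpiφ : pi ⬝ᵥ φ ≤ pi ⬝ᵥ f + l / ((a:ℝ)+1) := by
    calc pi ⬝ᵥ φ ≤ pi ⬝ᵥ b := dot_mono hpi.1 fun x => min_le_right _ _
      _ = pi ⬝ᵥ (lazyM P ^ a *ᵥ f) + ∑ i ∈ Finset.range l,
          ∑ x, pi x * |(lazyM P ^ (a+i+1) *ᵥ f) x - (lazyM P ^ (a+i) *ᵥ f) x| := by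
          rw [Finset.sum_comm]
          simp only [dotProduct, b, mul_add, Finset.sum_add_distrib, Finset.mul_sum]
      _ ≤ pi ⬝ᵥ f + ∑ i ∈ Finset.range l, 1 / ((a:ℝ)+1) := by
          rw [dotProduct_mulVec, hpQ]
          gcongr with i hi
          refine (diff_l1 hP hpi hr f hff (a+i)).trans ?_
          push_cast
          gcongr
          linarith [(Nat.cast_nonneg i : (0:ℝ) ≤ i)]
      _ = _ := by simp [div_eq_mul_inv]
  -- the continuous-time law
  have hν := fun y => hasSum_exp_vec (lazyM P) μ y t
  set ν : Ω → ℝ := μ ᵥ* (Real.exp (-t) • NormedSpace.exp (t • lazyM P)) with hνdef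
  have hcd : contDist P pi (t/2) μ = tvDist ν pi := by
    rw [contDist]
    congr 1
    funext y
    rw [(hasSum_exp_vec P μ y (t/2)).tsum_eq, hνdef, exp_lazy]
  have hdot : ∀ g : Ω → ℝ, HasSum (fun k : ℕ => Real.exp (-t) * t ^ k / (Nat.factorial k) *
      ((μ ᵥ* (lazyM P ^ k)) ⬝ᵥ g)) (ν ⬝ᵥ g) := by
    intro g
    have := hasSum_sum (s := Finset.univ) fun y _ => (hν y).mul_right (g y)
    refine Eq.mp (congrArg (fun F => HasSum F _) ?_) this
    funext k
    simp only [dotProduct, Finset.mul_sum]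
    exact Finset.sum_congr rfl fun x _ => by ring
  have hp1 : HasSum (fun k : ℕ => Real.exp (-t) * t ^ k / (Nat.factorial k)) 1 := by
    simpa using hasSum_pois t 0
  have hν1 : ∑ x, ν x = 1 := by
    have h1 := hdot (fun _ => 1)
    have h2 : ∀ k, (μ ᵥ* (lazyM P ^ k)) ⬝ᵥ (fun _ => (1:ℝ)) = 1 := fun k => by
      simp [dotProduct, (vecMul_prob (pow_stoch hQ k) hμ).2]
    simp only [h2, mul_one] at h1
    have := h1.unique hp1
    simpa [dotProduct] using this
  have hmain : (μ ᵥ* (lazyM P ^ N)) ⬝ᵥ f ≤ ν ⬝ᵥ φ + 2 * Real.exp (t * θ^2 - θ * r) := by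
    have hL := hp1.mul_right ((μ ᵥ* (lazyM P ^ N)) ⬝ᵥ f)
    have hR := ((hdot φ).add ((hasSum_pois t θ).mul_right (Real.exp (-θ * (t + r))))).add
      ((hasSum_pois t (-θ)).mul_right (Real.exp (θ * (t - r))))
    have hle := hasSum_le (fun k => ?_) hL hR
    · rw [one_mul, ← Real.exp_add, ← Real.exp_add] at hle
      have q1 := abs_le.1 (Real.abs_exp_sub_one_sub_id_le (x := θ)
        (by rw [abs_of_nonneg hθ0]; exact hθ))
      have q2 := abs_le.1 (Real.abs_exp_sub_one_sub_id_le (x := -θ)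
        (by rw [abs_neg, abs_of_nonneg hθ0]; exact hθ))
      have r1 : Real.exp (t * (Real.exp θ - 1) + -θ * (t + r)) ≤ Real.exp (t * θ^2 - θ * r) := by
        apply Real.exp_le_exp.2
        nlinarith [q1.2]
      have r2 : Real.exp (t * (Real.exp (-θ) - 1) + θ * (t - r)) ≤
          Real.exp (t * θ^2 - θ * r) := by
        apply Real.exp_le_exp.2
        nlinarith [q2.2]
      linarith
    · have hpk : 0 ≤ Real.exp (-t) * t ^ k / (Nat.factorial k) := by positivity
      rw [mul_assoc (Real.exp (-t) * t ^ k / (Nat.factorial k)) (Real.exp (θ * k)),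
        mul_assoc (Real.exp (-t) * t ^ k / (Nat.factorial k)) (Real.exp (-θ * k)),
        ← mul_add, ← mul_add]
      refine mul_le_mul_of_nonneg_left ?_ hpk
      rw [← Real.exp_add, ← Real.exp_add]
      have hk := vecMul_prob (pow_stoch hQ k) hμ
      have hkφ : 0 ≤ (μ ᵥ* (lazyM P ^ k)) ⬝ᵥ φ :=
        Finset.sum_nonneg fun x _ => mul_nonneg (hk.1 x) (hφ0 x)
      have hN1 : (μ ᵥ* (lazyM P ^ N)) ⬝ᵥ f ≤ 1 :=
        dot_le_one (vecMul_prob (pow_stoch hQ N) hμ) hf1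
      have p1 := Real.exp_pos (θ * k + -θ * (t + r))
      have p2 := Real.exp_pos (-θ * k + θ * (t - r))
      by_cases hkw : |(k:ℝ) - t| ≤ r
      · obtain ⟨w1, w2⟩ := hw k hkw
        obtain ⟨i, rfl⟩ := Nat.exists_eq_add_of_le w1
        have : (μ ᵥ* (lazyM P ^ (k + a + i))) ⬝ᵥ f =
            (μ ᵥ* (lazyM P ^ k)) ⬝ᵥ (lazyM P ^ (a+i) *ᵥ f) := by
          rw [dotProduct_mulVec, vecMul_vecMul, ← pow_add, add_assoc]
        rw [this]
        have := dot_mono hk.1 (hφ i (by omega))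
        linarith
      · rw [not_le, lt_abs] at hkw
        rcases hkw with hkw | hkw
        · have : 1 ≤ Real.exp (θ * k + -θ * (t + r)) := Real.one_le_exp (by nlinarith)
          linarith
        · have : 1 ≤ Real.exp (-θ * k + θ * (t - r)) := Real.one_le_exp (by nlinarith)
          linarith
  have hge := tv_ge hν1 hpi.2 hφ0 hφ1
  rw [hf, hcd]
  linarith

end Helpers

/-- **Proposition 3.2 (eq. (16)) of Hermon–Peres.**
There is an absolute constant `C` such that for every finite irreducible reversible Markov
chain, every initial distribution `μ`, every `t ≥ 1` and every `2 ≤ s ≤ e^t`,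
`d_L(t + m, μ) ≤ d_c(t/2, μ) + 2/s² + √(C/s)`, where `r = 2√(2t log s)` and
`m = ⌈r(√s + 1)⌉`. -/
theorem lazy_dist_le_cont_dist_coupling :
    ∃ C : ℝ, 0 < C ∧
      ∀ (Ω : Type) [Fintype Ω] [DecidableEq Ω]
        (P : Matrix Ω Ω ℝ) (pi : Ω → ℝ), IsRevMC P pi →
        ∀ μ : Ω → ℝ, IsProbVec μ →
        ∀ t s : ℝ, 1 ≤ t → 2 ≤ s → s ≤ Real.exp t →
          lazyDist P pi
              (t + ((⌈2 * Real.sqrt (2 * t * Real.log s) * (Real.sqrt s + 1)⌉ : ℤ) : ℝ)) μ ≤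
            contDist P pi (t / 2) μ + 2 / s ^ 2 + Real.sqrt (C / s) := by
  refine ⟨36, by norm_num, ?_⟩
  intro Ω _ _ P pi h μ hμ t s ht hs hst
  have hs0 : 0 < s := by linarith
  have ht0 : 0 < t := by linarith
  set L := Real.log s with hLdef
  have hL1 : L ≤ t := by rw [hLdef, Real.log_le_iff_le_exp hs0]; exact hst
  have hL0 : 1 / 2 ≤ L := by
    have h1 : Real.log 2 ≤ L := Real.log_le_log (by norm_num) hs
    linarith [Real.log_two_gt_d9]
  set r := 2 * Real.sqrt (2 * t * L) with hrdef
  have hr2 : 2 ≤ r := by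
    have : 1 ≤ Real.sqrt (2 * t * L) := by
      rw [Real.one_le_sqrt]; nlinarith
    linarith
  have hss : 1 ≤ Real.sqrt s := by rw [Real.one_le_sqrt]; linarith
  have hsq : Real.sqrt s * Real.sqrt s = s := Real.mul_self_sqrt hs0.le
  set q := Real.sqrt s with hq
  set m := ⌈r * (q + 1)⌉ with hm
  have hm1 : r * (q + 1) ≤ (m:ℝ) := Int.le_ceil _
  have hm2 : (m:ℝ) < r * (q + 1) + 1 := Int.ceil_lt_add_one _
  have hrq : 2 ≤ r * q := by nlinarith
  set N := ⌊t + (m:ℝ)⌋₊ with hN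
  have hN1 : (N:ℝ) ≤ t + m := Nat.floor_le (by nlinarith)
  have hN2 : t + m < (N:ℝ) + 1 := Nat.lt_floor_add_one _
  obtain ⟨a, ha⟩ : ∃ a, a = ⌈r * q - 1⌉₊ := ⟨_, rfl⟩
  have ha1 : r * q - 1 ≤ (a:ℝ) := ha ▸ Nat.le_ceil _
  obtain ⟨l, hl⟩ : ∃ l, l = ⌈2 * r + 2⌉₊ := ⟨_, rfl⟩
  have hl1 : 2 * r + 2 ≤ (l:ℝ) := hl ▸ Nat.le_ceil _
  have hl2 : (l:ℝ) < 2 * r + 2 + 1 := hl ▸ Nat.ceil_lt_add_one (by linarith)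
  have hθ2 : Real.sqrt (L / t) ^ 2 = L / t := Real.sq_sqrt (by positivity)
  have core := main_core h hμ t (Real.sqrt (L / t)) r ht (Real.sqrt_nonneg _)
    (by rw [Real.sqrt_le_iff, one_pow, div_le_one ht0]; exact ⟨zero_le_one, hL1⟩) N a l (by
      intro k hk
      rw [abs_le] at hk
      constructor
      · have h1 : r * q - 1 < (N:ℝ) - k := by nlinarith [hk.2]
        have hkN : k ≤ N := by
          have : (k:ℝ) ≤ N := by linarith
          exact_mod_cast this
        have h2 : a ≤ N - k := by
          rw [ha]; apply Nat.ceil_le.2; rw [Nat.cast_sub hkN]; linarith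
        omega
      · have : (N:ℝ) ≤ k + a + l := by nlinarith [hk.1]
        exact_mod_cast this)
  have hθr : L * 2 ≤ Real.sqrt (L / t) * r := by
    have h1 : Real.sqrt (L / t) * Real.sqrt (2 * t * L) = Real.sqrt (2 * L ^ 2) := by
      rw [← Real.sqrt_mul (by positivity)]
      congr 1; field_simp
    have h2 : L ≤ Real.sqrt (2 * L ^ 2) := Real.le_sqrt_of_sq_le (by nlinarith)
    rw [hrdef]; linarith
  have hexp : Real.exp (t * Real.sqrt (L / t) ^ 2 - Real.sqrt (L / t) * r) ≤ 1 / s := by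
    have h1 : t * Real.sqrt (L / t) ^ 2 = L := by rw [hθ2]; field_simp
    have h2 : 1 / s = Real.exp (-L) := by rw [Real.exp_neg, hLdef, Real.exp_log hs0, one_div]
    rw [h1, h2]
    apply Real.exp_le_exp.2; linarith
  have hlast : (l:ℝ) / ((a:ℝ) + 1) ≤ 4 / q := by
    rw [div_le_div_iff₀ (by positivity) (by positivity)]
    nlinarith
  have h1s : 1 / s ≤ 1 / q := by
    apply one_div_le_one_div_of_le (by positivity); nlinarith
  have hC : Real.sqrt (36 / s) = 6 * (1 / q) := by
    rw [Real.sqrt_div (by norm_num), show (36:ℝ) = 6 ^ 2 by norm_num,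
      Real.sqrt_sq (by norm_num)]
    ring
  have h2s : 0 ≤ 2 / s ^ 2 := by positivity
  have h4 : 4 / q = 4 * (1 / q) := by ring
  rw [hC, lazyDist]
  linarith
end

section
/- There exists an absolute constant C such that for every finite irreducible reversible Markov chain (Ω,P,π), every probability measure μ on Ω, every real t ≥ 1 and every s with 2 ≤ s ≤ e^t: d_ave(t + m, μ) ≤ d_L(2t, μ) + 2/s² + √(C/s), where r := 2√(2t log s) and m := ⌈r(√s + 1)⌉. -/
open Matrix Filter Asymptotics

section Helpers

variable {Ω : Type} [Fintype Ω] [DecidableEq Ω]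

/-- squared weighted norm -/
noncomputable def nsq (pi : Ω → ℝ) (f : Ω → ℝ) : ℝ := ∑ x, pi x * f x ^ 2

lemma nsq_nonneg {pi : Ω → ℝ} (hpi : ∀ x, 0 ≤ pi x) (f : Ω → ℝ) : 0 ≤ nsq pi f :=
  Finset.sum_nonneg fun x _ => mul_nonneg (hpi x) (sq_nonneg _)

lemma pi_mulVec {P : Matrix Ω Ω ℝ} {pi : Ω → ℝ} (hst : pi ᵥ* P = pi) (f : Ω → ℝ) :
    pi ⬝ᵥ (P *ᵥ f) = pi ⬝ᵥ f := by
  rw [Matrix.dotProduct_mulVec, hst]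

lemma pi_pow_mulVec {P : Matrix Ω Ω ℝ} {pi : Ω → ℝ} (hst : pi ᵥ* P = pi) (k : ℕ) (f : Ω → ℝ) :
    pi ⬝ᵥ ((P ^ k) *ᵥ f) = pi ⬝ᵥ f := by
  induction k with
  | zero => simp
  | succ k ih =>
    rw [pow_succ', ← Matrix.mulVec_mulVec, pi_mulVec hst, ih]

lemma nsq_mulVec_le {P : Matrix Ω Ω ℝ} {pi : Ω → ℝ} (hP : IsStochastic P)
    (hpi : ∀ x, 0 ≤ pi x) (hst : pi ᵥ* P = pi) (f : Ω → ℝ) :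
    nsq pi (P *ᵥ f) ≤ nsq pi f := by
  have h1 : ∀ x, (P *ᵥ f) x ^ 2 ≤ (P *ᵥ (fun y => f y ^ 2)) x := by
    intro x
    have := Finset.sum_sq_le_sum_mul_sum_of_sq_eq_mul Finset.univ
      (r := fun y => P x y * f y) (f := fun y => P x y) (g := fun y => P x y * f y ^ 2)
      (fun y _ => hP.1 x y) (fun y _ => mul_nonneg (hP.1 x y) (sq_nonneg _))
      (fun y _ => by ring)
    rw [hP.2 x, one_mul] at this
    exact this
  calc nsq pi (P *ᵥ f) ≤ pi ⬝ᵥ (P *ᵥ (fun y => f y ^ 2)) :=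
        Finset.sum_le_sum fun x _ => mul_le_mul_of_nonneg_left (h1 x) (hpi x)
    _ = pi ⬝ᵥ (fun y => f y ^ 2) := pi_mulVec hst _
    _ = nsq pi f := rfl

lemma rev_symm {P : Matrix Ω Ω ℝ} {pi : Ω → ℝ} (hr : IsReversible P pi) (f g : Ω → ℝ) :
    ∑ x, pi x * ((P *ᵥ f) x * g x) = ∑ x, pi x * (f x * (P *ᵥ g) x) := by
  simp only [Matrix.mulVec, dotProduct, Finset.sum_mul, Finset.mul_sum]
  rw [Finset.sum_comm]
  refine Finset.sum_congr rfl fun x _ => Finset.sum_congr rfl fun y _ => ?_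
  have := hr x y
  linear_combination (-(f x * g y)) * this

lemma nsq_second_diff {P : Matrix Ω Ω ℝ} {pi : Ω → ℝ} (hr : IsReversible P pi) (u : Ω → ℝ) :
    nsq pi (u - P *ᵥ (P *ᵥ u)) =
      nsq pi u - 2 * nsq pi (P *ᵥ u) + nsq pi (P *ᵥ (P *ᵥ u)) := by
  have h := rev_symm hr u (P *ᵥ u)
  simp only [nsq, Finset.mul_sum] at *
  have e : ∀ x, pi x * (u - P *ᵥ (P *ᵥ u)) x ^ 2 = pi x * u x ^ 2
      - 2 * (pi x * (u x * (P *ᵥ (P *ᵥ u)) x)) + pi x * (P *ᵥ (P *ᵥ u)) x ^ 2 := by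
    intro x; simp only [Pi.sub_apply]; ring
  rw [Finset.sum_congr rfl fun x _ => e x, Finset.sum_add_distrib, Finset.sum_sub_distrib,
    ← Finset.mul_sum, ← h, ← Finset.mul_sum]
  congr 3
  refine Finset.sum_congr rfl fun x _ => by ring

lemma nsq_decay {P : Matrix Ω Ω ℝ} {pi : Ω → ℝ} (hP : IsStochastic P)
    (hpi : ∀ x, 0 ≤ pi x) (hst : pi ᵥ* P = pi) (hr : IsReversible P pi) (f : Ω → ℝ) (k : ℕ) :
    ((k : ℝ) * (k + 1) / 2) * nsq pi ((P ^ k) *ᵥ f - (P ^ (k + 2)) *ᵥ f) ≤ nsq pi f := by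
  have hs : ∀ k : ℕ, (P ^ (k + 1)) *ᵥ f = P *ᵥ ((P ^ k) *ᵥ f) := by
    intro k; rw [pow_succ', ← Matrix.mulVec_mulVec]
  have hD : ∀ k : ℕ, nsq pi ((P ^ k) *ᵥ f - (P ^ (k + 2)) *ᵥ f) =
      nsq pi ((P ^ k) *ᵥ f) - 2 * nsq pi ((P ^ (k + 1)) *ᵥ f) + nsq pi ((P ^ (k + 2)) *ᵥ f) := by
    intro k
    have := nsq_second_diff hr ((P ^ k) *ᵥ f)
    rwa [← hs, ← hs] at this
  have hDm : ∀ k : ℕ, nsq pi ((P ^ (k + 1)) *ᵥ f - (P ^ (k + 1 + 2)) *ᵥ f) ≤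
      nsq pi ((P ^ k) *ᵥ f - (P ^ (k + 2)) *ᵥ f) := by
    intro k
    have := nsq_mulVec_le hP hpi hst ((P ^ k) *ᵥ f - (P ^ (k + 2)) *ᵥ f)
    rwa [Matrix.mulVec_sub, ← hs, ← hs] at this
  have key : ∀ k : ℕ, nsq pi ((P ^ k) *ᵥ f)
      + k * (nsq pi ((P ^ k) *ᵥ f) - nsq pi ((P ^ (k + 1)) *ᵥ f))
      + ((k : ℝ) * (k + 1) / 2) * nsq pi ((P ^ k) *ᵥ f - (P ^ (k + 2)) *ᵥ f) ≤ nsq pi f := by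
    intro k
    induction k with
    | zero => simp
    | succ k ih =>
      refine le_trans ?_ ih
      have h1 := hD k
      have h2 := mul_le_mul_of_nonneg_left (hDm k)
        (show (0 : ℝ) ≤ ((k : ℝ) + 1) * (k + 2) / 2 by positivity)
      push_cast
      have e : k + 1 + 1 = k + 2 := rfl
      rw [e]
      nlinarith
  have h3 : nsq pi ((P ^ (k + 1)) *ᵥ f) ≤ nsq pi ((P ^ k) *ᵥ f) := by
    rw [hs]; exact nsq_mulVec_le hP hpi hst _
  have h4 := nsq_nonneg hpi ((P ^ k) *ᵥ f)
  have h5 : (0 : ℝ) ≤ k * (nsq pi ((P ^ k) *ᵥ f) - nsq pi ((P ^ (k + 1)) *ᵥ f)) :=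
    mul_nonneg (Nat.cast_nonneg k) (by linarith)
  linarith [key k]

/-- averaged operator on functions -/
noncomputable def aveF (P : Matrix Ω Ω ℝ) (k : ℕ) (f : Ω → ℝ) : Ω → ℝ :=
  fun x => (((P ^ k) *ᵥ f) x + ((P ^ (k + 1)) *ᵥ f) x) / 2

lemma aveF_L1 {P : Matrix Ω Ω ℝ} {pi : Ω → ℝ} (h : IsRevMC P pi) (f : Ω → ℝ)
    (hf0 : ∀ x, 0 ≤ f x) (hf1 : ∀ x, f x ≤ 1) (k : ℕ) (hk : 0 < k) :
    ∑ x, pi x * |aveF P k f x - aveF P (k + 1) f x| ≤ 1 / k := by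
  obtain ⟨⟨hP, _, ⟨hpi, hpi1⟩, hst⟩, hr⟩ := h
  have hd := nsq_decay hP hpi hst hr f k
  have hf : nsq pi f ≤ 1 := by
    rw [← hpi1]
    refine Finset.sum_le_sum fun x _ => ?_
    have : f x ^ 2 ≤ 1 := pow_le_one₀ (hf0 x) (hf1 x)
    nlinarith [hpi x]
  set D := nsq pi ((P ^ k) *ᵥ f - (P ^ (k + 2)) *ᵥ f) with hDdef
  have hD0 : 0 ≤ D := nsq_nonneg hpi _
  have hcs := Finset.sum_sq_le_sum_mul_sum_of_sq_eq_mul Finset.univ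
      (r := fun x => pi x * |aveF P k f x - aveF P (k + 1) f x|) (f := pi)
      (g := fun x => pi x * |aveF P k f x - aveF P (k + 1) f x| ^ 2)
      (fun y _ => hpi y) (fun y _ => mul_nonneg (hpi y) (sq_nonneg _))
      (fun y _ => by ring)
  have e : ∑ x, pi x * |aveF P k f x - aveF P (k + 1) f x| ^ 2 = D / 4 := by
    rw [hDdef, nsq, Finset.sum_div]
    refine Finset.sum_congr rfl fun x _ => ?_
    rw [sq_abs]
    simp only [aveF, Pi.sub_apply]
    have e : k + 1 + 1 = k + 2 := rfl
    rw [e]; ring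
  rw [hpi1, one_mul, e] at hcs
  have hk' : (0 : ℝ) < k := Nat.cast_pos.mpr hk
  have : D / 4 ≤ (1 / (k : ℝ)) ^ 2 := by
    rw [one_div, inv_pow, inv_eq_one_div, le_div_iff₀ (by positivity)]
    nlinarith [mul_nonneg hk'.le hD0, mul_nonneg (sq_nonneg (k : ℝ)) hD0]
  exact le_of_sq_le_sq (hcs.trans this) (by positivity)

lemma pow_stoch_s17 {P : Matrix Ω Ω ℝ} (hP : IsStochastic P) (k : ℕ) : IsStochastic (P ^ k) := by
  induction k with
  | zero =>
    refine ⟨fun x y => ?_, fun x => ?_⟩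
    · simp only [pow_zero, Matrix.one_apply]; split_ifs <;> norm_num
    · simp [Matrix.one_apply]
  | succ k ih =>
    refine ⟨fun x y => ?_, fun x => ?_⟩
    · rw [pow_succ, Matrix.mul_apply]
      exact Finset.sum_nonneg fun z _ => mul_nonneg (ih.1 x z) (hP.1 z y)
    · simp only [pow_succ, Matrix.mul_apply]
      rw [Finset.sum_comm]
      simp only [← Finset.mul_sum, hP.2, mul_one, ih.2]

lemma stoch_mulVec_nonneg {P : Matrix Ω Ω ℝ} (hP : IsStochastic P) {f : Ω → ℝ}
    (hf0 : ∀ x, 0 ≤ f x) (x : Ω) : 0 ≤ (P *ᵥ f) x :=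
  Finset.sum_nonneg fun y _ => mul_nonneg (hP.1 x y) (hf0 y)

lemma stoch_mulVec_le {P : Matrix Ω Ω ℝ} (hP : IsStochastic P) {f : Ω → ℝ}
    (hf1 : ∀ x, f x ≤ 1) (x : Ω) : (P *ᵥ f) x ≤ 1 := by
  rw [← hP.2 x]
  exact Finset.sum_le_sum fun y _ => by nlinarith [hP.1 x y, hf1 y]

lemma probVec_vecMul {P : Matrix Ω Ω ℝ} (hP : IsStochastic P) {μ : Ω → ℝ} (hμ : IsProbVec μ) :
    IsProbVec (μ ᵥ* P) := by
  refine ⟨fun y => Finset.sum_nonneg fun x _ => mul_nonneg (hμ.1 x) (hP.1 x y), ?_⟩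
  have : (μ ᵥ* P) ⬝ᵥ 1 = μ ⬝ᵥ (P *ᵥ 1) := (Matrix.dotProduct_mulVec _ _ _).symm
  have h1 : P *ᵥ (1 : Ω → ℝ) = 1 := by
    ext x; simp [Matrix.mulVec, dotProduct, hP.2]
  rw [h1] at this
  simpa [dotProduct, hμ.2] using this

/-- dual bound -/
lemma sub_le_tvDist {p q : Ω → ℝ} (hp : IsProbVec p) (hq : IsProbVec q) {g : Ω → ℝ}
    (hg0 : ∀ x, 0 ≤ g x) (hg1 : ∀ x, g x ≤ 1) : q ⬝ᵥ g - p ⬝ᵥ g ≤ tvDist p q := by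
  have h : q ⬝ᵥ g - p ⬝ᵥ g = ∑ x, (q x - p x) * (g x - 1 / 2) := by
    have : ∑ x, (q x - p x) * (g x - 1 / 2) =
        ∑ x, (q x * g x - p x * g x) - (∑ x, q x - ∑ x, p x) / 2 := by
      rw [← Finset.sum_sub_distrib, Finset.sum_div, ← Finset.sum_sub_distrib]
      exact Finset.sum_congr rfl fun x _ => by ring
    rw [this, hp.2, hq.2, Finset.sum_sub_distrib]
    simp [dotProduct]
  rw [h, tvDist, Finset.sum_div]
  refine Finset.sum_le_sum fun x _ => ?_
  have h1 : |g x - 1 / 2| ≤ 1 / 2 := abs_le.mpr ⟨by linarith [hg0 x], by linarith [hg1 x]⟩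
  calc (q x - p x) * (g x - 1 / 2) ≤ |(q x - p x) * (g x - 1 / 2)| := le_abs_self _
    _ = |p x - q x| * |g x - 1 / 2| := by rw [abs_mul, abs_sub_comm]
    _ ≤ |p x - q x| * (1 / 2) := mul_le_mul_of_nonneg_left h1 (abs_nonneg _)
    _ = _ := by ring

lemma tvDist_attained {p q : Ω → ℝ} (hp : IsProbVec p) (hq : IsProbVec q) :
    ∃ f : Ω → ℝ, (∀ x, 0 ≤ f x) ∧ (∀ x, f x ≤ 1) ∧ tvDist p q = q ⬝ᵥ f - p ⬝ᵥ f := by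
  refine ⟨fun x => if p x ≤ q x then 1 else 0, fun x => ?_, fun x => ?_, ?_⟩
  · dsimp only; split_ifs <;> norm_num
  · dsimp only; split_ifs <;> norm_num
  · have e : ∀ x, |p x - q x| / 2 = q x * (if p x ≤ q x then 1 else 0)
        - p x * (if p x ≤ q x then 1 else 0) - (q x - p x) / 2 := by
      intro x
      split_ifs with h
      · rw [abs_of_nonpos (by linarith)]; ring
      · rw [abs_of_pos (by linarith)]; ring
    rw [tvDist, Finset.sum_div, Finset.sum_congr rfl fun x _ => e x, Finset.sum_sub_distrib,
      Finset.sum_sub_distrib, ← Finset.sum_div, Finset.sum_sub_distrib, hp.2, hq.2]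
    simp [dotProduct]

lemma lazy_pow (P : Matrix Ω Ω ℝ) (N : ℕ) :
    lazyM P ^ N = ∑ k ∈ Finset.range (N + 1), ((N.choose k : ℝ) / 2 ^ N) • P ^ k := by
  rw [lazyM, smul_pow, add_comm, (Commute.one_right P).add_pow, Finset.smul_sum]
  refine Finset.sum_congr rfl fun k _ => ?_
  rw [one_pow, mul_one, ← nsmul_eq_mul', ← Nat.cast_smul_eq_nsmul ℝ, smul_smul]
  congr 1
  rw [inv_pow]; ring

lemma core {P : Matrix Ω Ω ℝ} {pi : Ω → ℝ} (h : IsRevMC P pi) {μ : Ω → ℝ} (hμ : IsProbVec μ)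
    (n N a b : ℕ) (ε : ℝ) (ha : 0 < a) (hab : a ≤ b) (G : Finset ℕ)
    (hG : G ⊆ Finset.range (N + 1)) (hGw : ∀ k ∈ G, a + k ≤ n ∧ n ≤ b + k)
    (hε : ∑ k ∈ Finset.range (N + 1) \ G, (N.choose k : ℝ) / 2 ^ N ≤ ε) :
    tvDist (fun y => ((μ ᵥ* (P ^ n)) y + (μ ᵥ* (P ^ (n + 1))) y) / 2) pi ≤
      tvDist (μ ᵥ* (lazyM P ^ N)) pi + ε + ((b : ℝ) - a) / a := by
  have h' := h
  obtain ⟨⟨hP, _, hpiP, hst⟩, hr⟩ := h'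
  have hμn := fun k => probVec_vecMul (pow_stoch_s17 hP k) hμ
  have hp : IsProbVec (fun y => ((μ ᵥ* (P ^ n)) y + (μ ᵥ* (P ^ (n + 1))) y) / 2) := by
    refine ⟨fun y => ?_, ?_⟩
    · have := (hμn n).1 y
      have := (hμn (n + 1)).1 y
      positivity
    · rw [← Finset.sum_div, Finset.sum_add_distrib, (hμn n).2, (hμn (n + 1)).2]; norm_num
  obtain ⟨f, hf0, hf1, hf⟩ := tvDist_attained hp hpiP
  rw [hf]
  have hA0 : ∀ k x, 0 ≤ aveF P k f x := fun k x => by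
    have := stoch_mulVec_nonneg (pow_stoch_s17 hP k) hf0 x
    have := stoch_mulVec_nonneg (pow_stoch_s17 hP (k + 1)) hf0 x
    simp only [aveF]; positivity
  have hA1 : ∀ k x, aveF P k f x ≤ 1 := fun k x => by
    have := stoch_mulVec_le (pow_stoch_s17 hP k) hf1 x
    have := stoch_mulVec_le (pow_stoch_s17 hP (k + 1)) hf1 x
    simp only [aveF]; linarith
  set w : Ω → ℝ := fun x => ∑ j ∈ Finset.Ico a b, |aveF P j f x - aveF P (j + 1) f x| with hw
  set g : Ω → ℝ := fun x => max (aveF P a f x - w x) 0 with hg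
  have hw0 : ∀ x, 0 ≤ w x := fun x => Finset.sum_nonneg fun _ _ => abs_nonneg _
  have hg0 : ∀ x, 0 ≤ g x := fun x => le_max_right _ _
  have hg1 : ∀ x, g x ≤ 1 := fun x => max_le (by linarith [hA1 a x, hw0 x]) zero_le_one
  have hgA : ∀ k, a ≤ k → k ≤ b → ∀ x, g x ≤ aveF P k f x := by
    intro k hak hkb x
    refine max_le ?_ (hA0 k x)
    have h1 : aveF P a f x - aveF P k f x =
        ∑ j ∈ Finset.Ico a k, (aveF P j f x - aveF P (j + 1) f x) := by
      have := Finset.sum_Ico_sub (fun j => aveF P j f x) hak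
      rw [← neg_sub, ← this, ← Finset.sum_neg_distrib]
      exact Finset.sum_congr rfl fun j _ => by ring
    have h2 : ∑ j ∈ Finset.Ico a k, (aveF P j f x - aveF P (j + 1) f x) ≤ w x :=
      (Finset.sum_le_sum fun j _ => le_abs_self _).trans
        (Finset.sum_le_sum_of_subset_of_nonneg (Finset.Ico_subset_Ico_right hkb)
          fun _ _ _ => abs_nonneg _)
    linarith
  -- weights
  have hb0 : ∀ k : ℕ, (0 : ℝ) ≤ (N.choose k : ℝ) / 2 ^ N := fun k => by positivity
  have hb1 : ∑ k ∈ Finset.range (N + 1), (N.choose k : ℝ) / 2 ^ N = 1 := by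
    rw [← Finset.sum_div]
    have := Nat.sum_range_choose N
    have : (∑ k ∈ Finset.range (N + 1), (N.choose k : ℝ)) = 2 ^ N := by exact_mod_cast this
    rw [this]; field_simp
  set p : Ω → ℝ := fun y => ((μ ᵥ* (P ^ n)) y + (μ ᵥ* (P ^ (n + 1))) y) / 2 with hpdef
  have hpf0 : 0 ≤ p ⬝ᵥ f := Finset.sum_nonneg fun x _ => mul_nonneg (hp.1 x) (hf0 x)
  have hpf : ∀ k, k ≤ n → p ⬝ᵥ f = (μ ᵥ* P ^ k) ⬝ᵥ aveF P (n - k) f := by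
    intro k hk
    have e1 : p = (2 : ℝ)⁻¹ • (μ ᵥ* (P ^ n) + μ ᵥ* (P ^ (n + 1))) := by
      ext y; simp only [hpdef, Pi.smul_apply, Pi.add_apply, smul_eq_mul]; ring
    have e2 : aveF P (n - k) f = (2 : ℝ)⁻¹ • (P ^ (n - k) *ᵥ f + P ^ (n - k + 1) *ᵥ f) := by
      ext y; simp only [aveF, Pi.smul_apply, Pi.add_apply, smul_eq_mul]; ring
    rw [e1, e2, smul_dotProduct, dotProduct_smul, add_dotProduct, dotProduct_add,
      Matrix.dotProduct_mulVec, Matrix.dotProduct_mulVec, Matrix.vecMul_vecMul,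
      Matrix.vecMul_vecMul, ← pow_add, ← pow_add, ← Nat.add_assoc, Nat.add_sub_cancel' hk]
  have hlow : ∑ k ∈ G, ((N.choose k : ℝ) / 2 ^ N) * ((μ ᵥ* P ^ k) ⬝ᵥ g) ≤ p ⬝ᵥ f := by
    calc ∑ k ∈ G, ((N.choose k : ℝ) / 2 ^ N) * ((μ ᵥ* P ^ k) ⬝ᵥ g)
        ≤ ∑ k ∈ G, ((N.choose k : ℝ) / 2 ^ N) * (p ⬝ᵥ f) := by
          refine Finset.sum_le_sum fun k hk => mul_le_mul_of_nonneg_left ?_ (hb0 k)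
          obtain ⟨h1, h2⟩ := hGw k hk
          rw [hpf k (by omega)]
          exact Finset.sum_le_sum fun x _ => mul_le_mul_of_nonneg_left
            (hgA (n - k) (by omega) (by omega) x) ((hμn k).1 x)
      _ = (∑ k ∈ G, ((N.choose k : ℝ) / 2 ^ N)) * (p ⬝ᵥ f) := by rw [Finset.sum_mul]
      _ ≤ 1 * (p ⬝ᵥ f) := by
          refine mul_le_mul_of_nonneg_right ?_ hpf0
          rw [← hb1]
          exact Finset.sum_le_sum_of_subset_of_nonneg hG fun k _ _ => hb0 k
      _ = _ := one_mul _
  have hbad : ∑ k ∈ Finset.range (N + 1) \ G, ((N.choose k : ℝ) / 2 ^ N) * ((μ ᵥ* P ^ k) ⬝ᵥ g)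
      ≤ ε := by
    refine le_trans (Finset.sum_le_sum fun k _ => ?_) hε
    refine mul_le_of_le_one_right (hb0 k) ?_
    rw [← (hμn k).2]
    exact Finset.sum_le_sum fun x _ => mul_le_of_le_one_right ((hμn k).1 x) (hg1 x)
  have hlz : (μ ᵥ* (lazyM P ^ N)) ⬝ᵥ g =
      ∑ k ∈ Finset.range (N + 1), ((N.choose k : ℝ) / 2 ^ N) * ((μ ᵥ* P ^ k) ⬝ᵥ g) := by
    rw [lazy_pow, Matrix.vecMul_sum, sum_dotProduct]
    refine Finset.sum_congr rfl fun k _ => ?_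
    rw [Matrix.vecMul_smul, smul_dotProduct, smul_eq_mul]
  have hsplit := Finset.sum_sdiff hG
    (f := fun k => ((N.choose k : ℝ) / 2 ^ N) * ((μ ᵥ* P ^ k) ⬝ᵥ g))
  have htv := sub_le_tvDist (probVec_vecMul (pow_stoch_s17 (lazy_stoch hP) N) hμ) hpiP hg0 hg1
  have hpig : pi ⬝ᵥ f - pi ⬝ᵥ w ≤ pi ⬝ᵥ g := by
    have e : pi ⬝ᵥ f = pi ⬝ᵥ aveF P a f := by
      have e2 : aveF P a f = (2 : ℝ)⁻¹ • (P ^ a *ᵥ f + P ^ (a + 1) *ᵥ f) := by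
        ext y; simp only [aveF, Pi.smul_apply, Pi.add_apply, smul_eq_mul]; ring
      rw [e2, dotProduct_smul, dotProduct_add, pi_pow_mulVec hst, pi_pow_mulVec hst, smul_eq_mul]
      ring
    rw [e, ← dotProduct_sub]
    exact Finset.sum_le_sum fun x _ => mul_le_mul_of_nonneg_left (le_max_left _ _) (hpiP.1 x)
  have hpiw : pi ⬝ᵥ w ≤ ((b : ℝ) - a) / a := by
    have e : pi ⬝ᵥ w = ∑ j ∈ Finset.Ico a b,
        ∑ x, pi x * |aveF P j f x - aveF P (j + 1) f x| := by
      rw [Finset.sum_comm]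
      exact Finset.sum_congr rfl fun x _ => by simp only [hw, Finset.mul_sum]
    rw [e]
    have ha' : (0 : ℝ) < a := Nat.cast_pos.mpr ha
    calc _ ≤ ∑ j ∈ Finset.Ico a b, 1 / (a : ℝ) := by
          refine Finset.sum_le_sum fun j hj => ?_
          have hj' := (Finset.mem_Ico.mp hj).1
          refine (aveF_L1 h f hf0 hf1 j (by omega)).trans ?_
          exact one_div_le_one_div_of_le ha' (by exact_mod_cast hj')
      _ = ((b : ℝ) - a) / a := by
          rw [Finset.sum_const, Nat.card_Ico, nsmul_eq_mul, Nat.cast_sub hab]; ring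
  rw [hlz] at htv
  linarith

end Helpers

lemma binom_mgf (N : ℕ) (θ : ℝ) :
    ∑ k ∈ Finset.range (N + 1), (N.choose k : ℝ) / 2 ^ N * Real.exp (θ * (2 * k - N)) ≤
      Real.exp (N * θ ^ 2 / 2) := by
  have h1 : ∑ k ∈ Finset.range (N + 1), (N.choose k : ℝ) / 2 ^ N * Real.exp (θ * (2 * k - N))
      = Real.cosh θ ^ N := by
    rw [Real.cosh_eq, div_pow, add_pow, Finset.sum_div]
    refine Finset.sum_congr rfl fun k hk => ?_
    have hk' : k ≤ N := by simpa [Nat.lt_succ_iff] using hk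
    rw [← Real.exp_nat_mul, ← Real.exp_nat_mul, ← Real.exp_add, Nat.cast_sub hk']
    have : (k : ℝ) * θ + ((N : ℝ) - k) * -θ = θ * (2 * k - N) := by ring
    rw [this]; ring
  rw [h1]
  calc Real.cosh θ ^ N ≤ Real.exp (θ ^ 2 / 2) ^ N :=
        pow_le_pow_left₀ (Real.cosh_pos θ).le (Real.cosh_le_exp_half_sq θ) N
    _ = _ := by rw [← Real.exp_nat_mul]; congr 1; ring

lemma binom_tail (N : ℕ) (t a : ℝ) (ht : 0 < t) (hN : (N : ℝ) ≤ 2 * t) (ha : 0 ≤ a) :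
    ∑ k ∈ (Finset.range (N + 1)).filter (fun k : ℕ => 2 * a < |2 * (k : ℝ) - N|),
      (N.choose k : ℝ) / 2 ^ N ≤ 2 * Real.exp (-(a ^ 2 / t)) := by
  set θ := a / t with hθ
  have hθ0 : 0 ≤ θ := div_nonneg ha ht.le
  have h1 := binom_mgf N θ
  have h2 := binom_mgf N (-θ)
  have h3 : Real.exp (N * θ ^ 2 / 2) ≤ Real.exp (t * θ ^ 2) :=
    Real.exp_le_exp.mpr (by nlinarith [sq_nonneg θ])
  have h4 : ∑ k ∈ (Finset.range (N + 1)).filter (fun k : ℕ => 2 * a < |2 * (k : ℝ) - N|),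
      (N.choose k : ℝ) / 2 ^ N ≤ ∑ k ∈ Finset.range (N + 1), Real.exp (-(2 * a * θ)) *
        ((N.choose k : ℝ) / 2 ^ N * Real.exp (θ * (2 * k - N)) +
          (N.choose k : ℝ) / 2 ^ N * Real.exp (-θ * (2 * k - N))) := by
    rw [Finset.sum_filter]
    refine Finset.sum_le_sum fun k _ => ?_
    have hb : (0 : ℝ) ≤ (N.choose k : ℝ) / 2 ^ N := by positivity
    split_ifs with hk
    · rw [← mul_add, mul_left_comm]
      refine le_mul_of_one_le_right hb ?_
      rw [mul_add, ← Real.exp_add, ← Real.exp_add]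
      rcases lt_abs.mp hk with hk | hk
      · have : 1 ≤ Real.exp (-(2 * a * θ) + θ * (2 * k - N)) :=
          Real.one_le_exp (by nlinarith)
        have := Real.exp_pos (-(2 * a * θ) + -θ * (2 * k - N))
        linarith
      · have : 1 ≤ Real.exp (-(2 * a * θ) + -θ * (2 * k - N)) :=
          Real.one_le_exp (by nlinarith)
        have := Real.exp_pos (-(2 * a * θ) + θ * (2 * k - N))
        linarith
    · positivity
  rw [← Finset.mul_sum, Finset.sum_add_distrib] at h4
  rw [neg_sq] at h2
  calc _ ≤ _ := h4
    _ ≤ Real.exp (-(2 * a * θ)) * (2 * Real.exp (t * θ ^ 2)) :=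
        mul_le_mul_of_nonneg_left (by linarith) (Real.exp_pos _).le
    _ = 2 * Real.exp (-(a ^ 2 / t)) := by
        rw [mul_left_comm, ← Real.exp_add]
        congr 2
        rw [hθ]; field_simp; ring

/-- **Proposition 3.2 (eq. (19)) of Hermon–Peres.**
There is an absolute constant `C` such that for every finite irreducible reversible Markov
chain, every initial distribution `μ`, every `t ≥ 1` and every `2 ≤ s ≤ e^t`,
`d_ave(t + m, μ) ≤ d_L(2t, μ) + 2/s² + √(C/s)`, where `r = 2√(2t log s)` and
`m = ⌈r(√s + 1)⌉`. -/
theorem ave_dist_le_lazy_dist_coupling :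
    ∃ C : ℝ, 0 < C ∧
      ∀ (Ω : Type) [Fintype Ω] [DecidableEq Ω]
        (P : Matrix Ω Ω ℝ) (pi : Ω → ℝ), IsRevMC P pi →
        ∀ μ : Ω → ℝ, IsProbVec μ →
        ∀ t s : ℝ, 1 ≤ t → 2 ≤ s → s ≤ Real.exp t →
          aveDist P pi
              (t + ((⌈2 * Real.sqrt (2 * t * Real.log s) * (Real.sqrt s + 1)⌉ : ℤ) : ℝ)) μ ≤
            lazyDist P pi (2 * t) μ + 2 / s ^ 2 + Real.sqrt (C / s) := by
  refine ⟨4, by norm_num, ?_⟩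
  intro Ω _ _ P pi h μ hμ t s ht hs _
  set A := Real.sqrt (2 * t * Real.log s) with hA
  set r := 2 * A with hr
  set S := Real.sqrt s with hS
  set m : ℤ := ⌈r * (S + 1)⌉ with hm
  have hlog : (0.5 : ℝ) ≤ Real.log s := by
    have h1 := Real.log_two_gt_d9
    have h2 := Real.log_le_log (by norm_num) hs
    linarith
  have hA2 : A ^ 2 = 2 * t * Real.log s := Real.sq_sqrt (by positivity)
  have hA1 : 1 ≤ A := by
    rw [hA, Real.one_le_sqrt]; nlinarith
  have hS1 : 1 ≤ S := by
    rw [hS, Real.one_le_sqrt]; linarith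
  have hmle : r * (S + 1) ≤ m := Int.le_ceil _
  have hm0 : 0 ≤ m := by
    have : (0 : ℝ) ≤ m := le_trans (by positivity) hmle
    exact_mod_cast this
  obtain ⟨M, hM⟩ := Int.eq_ofNat_of_zero_le hm0
  have hMr : ((m : ℤ) : ℝ) = (M : ℝ) := by rw [hM]; simp
  rw [hMr] at hmle ⊢
  have hfl : ⌊t + (M : ℝ)⌋₊ = ⌊t⌋₊ + M := Nat.floor_add_natCast (by linarith) M
  unfold aveDist lazyDist
  rw [hfl]
  set N := ⌊2 * t⌋₊ with hN
  set T := ⌊t⌋₊ with hT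
  have hT1 : (T : ℝ) ≤ t := Nat.floor_le (by linarith)
  have hT2 : t < T + 1 := Nat.lt_floor_add_one t
  have hN1 : (N : ℝ) ≤ 2 * t := Nat.floor_le (by linarith)
  have hN2 : 2 * T ≤ N := Nat.le_floor (by push_cast; linarith)
  have hN3 : N ≤ 2 * T + 1 := by
    have : N < 2 * T + 2 := (Nat.floor_lt (by linarith)).mpr (by push_cast; linarith)
    omega
  have hN2' : 2 * (T : ℝ) ≤ N := by exact_mod_cast hN2
  have hN3' : (N : ℝ) ≤ 2 * T + 1 := by exact_mod_cast hN3
  have hrS : r * S + r ≤ M := by linarith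
  have hrS0 : 2 ≤ r * S := by nlinarith
  set a := ⌈(M : ℝ) - 1 / 2 - A⌉₊ with ha
  set b := ⌊(M : ℝ) + A⌋₊ with hb
  have ha1 : (M : ℝ) - 1 / 2 - A ≤ a := Nat.le_ceil _
  have ha2 : (a : ℝ) < (M : ℝ) - 1 / 2 - A + 1 := Nat.ceil_lt_add_one (by linarith)
  have hb1 : (b : ℝ) ≤ M + A := Nat.floor_le (by positivity)
  have hb2 : (M : ℝ) + A < b + 1 := Nat.lt_floor_add_one _
  have harS : r * S ≤ a := by linarith
  have ha0 : 0 < a := by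
    have : (0 : ℝ) < a := by linarith
    exact_mod_cast this
  have hab : a ≤ b := by
    have : (a : ℝ) < b + 1 := by linarith
    have : a < b + 1 := by exact_mod_cast this
    omega
  have hc := core h hμ (T + M) N a b (2 / s ^ 2) ha0 hab
    ((Finset.range (N + 1)).filter (fun k : ℕ => ¬ (2 * A < |2 * (k : ℝ) - N|)))
    (Finset.filter_subset _ _) ?_ ?_
  · refine hc.trans ?_
    have : ((b : ℝ) - a) / a ≤ Real.sqrt (4 / s) := by
      have e : Real.sqrt (4 / s) = 2 / S := by
        rw [Real.sqrt_div (by norm_num), show (4 : ℝ) = 2 ^ 2 by norm_num,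
          Real.sqrt_sq (by norm_num)]
      rw [e, div_le_div_iff₀ (by linarith) (by linarith)]
      have : (b : ℝ) - a ≤ 2 * r := by linarith
      nlinarith
    linarith
  · intro k hk
    obtain ⟨_, hk⟩ := Finset.mem_filter.mp hk
    obtain ⟨h1, h2⟩ := abs_le.mp (not_lt.mp hk)
    constructor
    · have : (a : ℝ) ≤ ((T + M - k : ℤ) : ℝ) := by
        have h3 : (M : ℝ) - 1 / 2 - A ≤ ((T + M - k : ℤ) : ℝ) := by push_cast; linarith
        have h4 : ⌈(M : ℝ) - 1 / 2 - A⌉ ≤ (T + M - k : ℤ) := Int.ceil_le.mpr h3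
        have h5 : ((a : ℤ)) = ⌈(M : ℝ) - 1 / 2 - A⌉ :=
          Int.natCast_ceil_eq_ceil (by linarith)
        rw [← h5] at h4
        exact_mod_cast h4
      have : (a : ℤ) ≤ T + M - k := by exact_mod_cast this
      omega
    · have h3 : ((T + M - k : ℤ) : ℝ) ≤ (M : ℝ) + A := by push_cast; linarith
      have h4 : (T + M - k : ℤ) ≤ ⌊(M : ℝ) + A⌋ := Int.le_floor.mpr h3
      have h5 : ((b : ℤ)) = ⌊(M : ℝ) + A⌋ := Int.natCast_floor_eq_floor (by positivity)
      omega
  · have e : Finset.range (N + 1) \ (Finset.range (N + 1)).filter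
        (fun k : ℕ => ¬ (2 * A < |2 * (k : ℝ) - N|)) =
        (Finset.range (N + 1)).filter (fun k : ℕ => 2 * A < |2 * (k : ℝ) - N|) := by
      ext k; simp only [Finset.mem_sdiff, Finset.mem_filter]; tauto
    rw [e]
    refine (binom_tail N t A (by linarith) hN1 (by linarith)).trans (le_of_eq ?_)
    have : A ^ 2 / t = Real.log (s ^ 2) := by
      rw [hA2, Real.log_pow]; push_cast; field_simp
    rw [this, Real.exp_neg, Real.exp_log (by positivity)]
    ring
end
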